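/- arXiv:2506.02988 — 4 statements merged into one kernel-verified Lean document; each statement's English description precedes it below -/
import Mathlib

section
/- Let k ≥ 4, let (ŵ, ℓ̂) ∈ T̄^PL_k, let q > 1 be an integer and n > 1 real, and suppose there exists at least one (1/n)-plausible multiset for ŵ, i.e., a multiset J of cardinality q with elements in {1,…,k} such that ∏_{j∈J}(1 + ŵ_j·y) = 1 has a solution y ∈ [1/n, 1]. Then for every ε > 0 there exists (w̄, ℓ̄) ∈ T̄^PL_k with max_i(|w̄_i − ŵ_i| + |ℓ̄_i − ℓ̂_i|) < ε such that the w̄_i are pairwise distinct and any two distinct (1/n)-plausible multisets for w̄ have distinct associated solutions: whenever J_1 ≠ J_2 are multisets of cardinality q with elements in {1,…,k} and b_1, b_2 ∈ [1/n, 1] satisfy ∏_{j∈J_1}(1 + b_1·w̄_j) = 1 and ∏_{j∈J_2}(1 + b_2·w̄_j) = 1, then b_1 ≠ b_2. -/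
/-- Membership in the space `T̄^PL_k` of reduced piecewise linear standard-like
forcing data: lengths `ℓ_i > 0` summing to `1`, weights `w_i ≥ -1` with
`w_1 = -1`, adjacent weights distinct (indices mod `k`), and `∑ w_i ℓ_i = 0`. -/
def TPL (k : ℕ) (w l : Fin k → ℝ) : Prop :=
  (∀ i, 0 < l i) ∧ (∑ i, l i = 1) ∧ (∀ i, -1 ≤ w i) ∧
  (∀ h : 0 < k, w ⟨0, h⟩ = -1) ∧
  (∀ i : Fin k, w i ≠ w ⟨((i : ℕ) + 1) % k, Nat.mod_lt _ i.pos⟩) ∧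
  (∑ i, w i * l i = 0)

/-! Raise every weight other than `w₁ = -1` by less than `δ`, so that these weights become
algebraically independent over `ℚ`, and restore `∑ wᵢ ℓᵢ = 0` by moving a little length from a
positive weight to the weight `-1`.

Suppose that two distinct multisets of the same cardinality shared a solution `b`, and put
`xⱼ = 1 + b wⱼ`. Then the `xⱼ` satisfy two monomial relations with non-proportional exponents.
Eliminating one variable from these makes two of the `k` numbers `xⱼ` algebraic over the other
`k - 2`. But `x₁ = 1 - b` determines `b`, and then `xⱼ` determines `wⱼ`, so the `xⱼ` have
transcendence degree at least `k - 1`. -/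

section AlgebraicIndependence

variable {ι R A : Type*} [CommRing R] [CommRing A] [IsDomain A] [Algebra R A]

theorem enatCard_le_encard_of_isAlgebraic_adjoin [FaithfulSMul R A] {v : ι → A}
    (hv : AlgebraicIndependent R v) {s : Set A}
    (hs : ∀ i, IsAlgebraic (Algebra.adjoin R s) (v i)) : ENat.card ι ≤ s.encard := by
  have := (algebraMap R A).domain_nontrivial
  have indep : (AlgebraicIndependent.matroid R A).Indep (Set.range v) :=
    AlgebraicIndependent.matroid_indep_iff.2 hv.to_subtype_range
  have range_subset : Set.range v ⊆ (AlgebraicIndependent.matroid R A).closure s := by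
    rw [AlgebraicIndependent.matroid_closure_eq]
    exact Set.range_subset_iff.2 hs
  calc ENat.card ι = (Set.range v).encard := by
        rw [← Set.image_univ, hv.injective.encard_image, Set.encard_univ]
    _ = (AlgebraicIndependent.matroid R A).eRk (Set.range v) := indep.eRk_eq_encard.symm
    _ ≤ (AlgebraicIndependent.matroid R A).eRk s :=
        (Matroid.eRk_mono _ range_subset).trans_eq (Matroid.eRk_closure_eq _ s)
    _ ≤ s.encard := Matroid.eRk_le_encard _ s

theorem countable_setOf_isAlgebraic_adjoin [Countable R] {s : Set A} (hs : s.Countable) :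
    {x : A | IsAlgebraic (Algebra.adjoin R s) x}.Countable := by
  have := hs.to_subtype
  have : Countable (Algebra.adjoin R s) := by
    rw [← Cardinal.mk_le_aleph0_iff, ← Cardinal.lift_le_aleph0]
    exact (Algebra.lift_cardinalMk_adjoin_le R s).trans (by simp)
  exact Algebraic.countable _ _

theorem exists_algebraicIndependent_mem [FaithfulSMul R A] [Finite ι] [Countable R]
    {s : ι → Set A} (hs : ∀ i, ¬ (s i).Countable) :
    ∃ v : ι → A, AlgebraicIndependent R v ∧ ∀ i, v i ∈ s i := by
  induction ι using Finite.induction_empty_option with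
  | of_equiv e ih =>
    obtain ⟨v, hv, hvs⟩ := ih fun i => hs (e i)
    refine ⟨v ∘ e.symm, hv.comp e.symm e.symm.injective, fun i => ?_⟩
    simpa using hvs (e.symm i)
  | h_empty =>
    exact ⟨isEmptyElim,
      algebraicIndependent_empty_type_iff.2 (FaithfulSMul.algebraMap_injective R A), isEmptyElim⟩
  | h_option ih =>
    obtain ⟨v, hv, hvs⟩ := ih fun i => hs (some i)
    obtain ⟨a, ha, ha_transc⟩ : ∃ a ∈ s none, Transcendental (Algebra.adjoin R (Set.range v)) a :=
      Set.not_subset.1 fun hsub =>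
        hs none ((countable_setOf_isAlgebraic_adjoin (Set.countable_range v)).mono hsub)
    exact ⟨fun o => o.elim a v, (hv.option_iff_transcendental a).2 ha_transc,
      Option.rec ha hvs⟩

end AlgebraicIndependence

section MonomialRelations

variable {ι R A : Type*} [CommRing R] [CommRing A] [Nontrivial A] [Algebra R A]

theorem isAlgebraic_of_pow_mul_pow_eq_one {x y : A} {r s : R} {m n m' n' : ℕ}
    (h : x ^ m * y ^ n * algebraMap R A r = 1) (h' : x ^ m' * y ^ n' * algebraMap R A s = 1)
    (hne : m * n' ≠ m' * n) : IsAlgebraic R x := by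
  have hx : x ^ (m * n') * y ^ (n * n') * algebraMap R A r ^ n' = 1 := by
    rw [pow_mul, pow_mul, ← mul_pow, ← mul_pow, h, one_pow]
  have hx' : x ^ (m' * n) * y ^ (n * n') * algebraMap R A s ^ n = 1 := by
    rw [mul_comm n, pow_mul, pow_mul, ← mul_pow, ← mul_pow, h', one_pow]
  have elim_y :
      algebraMap R A r ^ n' * x ^ (m * n') = algebraMap R A s ^ n * x ^ (m' * n) := by
    linear_combination (algebraMap R A s ^ n * x ^ (m' * n)) * hx
      - (algebraMap R A r ^ n' * x ^ (m * n')) * hx'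
  have hr : r ^ n' ≠ 0 := fun hr => by
    rw [← map_pow, hr, map_zero, mul_zero] at hx
    exact zero_ne_one hx
  refine ⟨.C (r ^ n') * .X ^ (m * n') - .C (s ^ n) * .X ^ (m' * n), fun hp => hr ?_, ?_⟩
  · simpa [Polynomial.coeff_C_mul, Polynomial.coeff_X_pow, hne, -map_pow]
      using congrArg (Polynomial.coeff · (m * n')) hp
  · simpa [sub_eq_zero] using elim_y

theorem isAlgebraic_adjoin_of_prod_pow_eq_one [Fintype ι] {x : ι → A} {μ ν : ι → ℕ}
    (hμ : ∏ j, x j ^ μ j = 1) (hν : ∏ j, x j ^ ν j = 1) {a c : ι}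
    (hac : μ a * ν c ≠ ν a * μ c) : IsAlgebraic (Algebra.adjoin R (x '' {a, c}ᶜ)) (x a) := by
  classical
  have hne : a ≠ c := by
    rintro rfl
    exact hac (mul_comm _ _)
  let X (j : ({a, c}ᶜ : Finset ι)) : Algebra.adjoin R (x '' {a, c}ᶜ) :=
    ⟨x j, Algebra.subset_adjoin ⟨j, by simpa using j.2, rfl⟩⟩
  have split (ξ : ι → ℕ) : x a ^ ξ a * x c ^ ξ c *
      algebraMap (Algebra.adjoin R (x '' {a, c}ᶜ)) A (∏ j, X j ^ ξ j) = ∏ j, x j ^ ξ j := by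
    rw [← Finset.prod_mul_prod_compl {a, c}, Finset.prod_pair hne, map_prod,
      ← Finset.prod_coe_sort {a, c}ᶜ]
    rfl
  exact isAlgebraic_of_pow_mul_pow_eq_one ((split μ).trans hμ) ((split ν).trans hν) hac

end MonomialRelations

section Multisets

variable {α M : Type*} [DecidableEq α]

theorem multiset_prod_map_eq_prod_pow_count [Fintype α] [CommMonoid M] (s : Multiset α)
    (f : α → M) : (s.map f).prod = ∏ a, f a ^ s.count a := by
  rw [Finset.prod_multiset_map_count]
  refine Finset.prod_subset (Finset.subset_univ _) fun a _ ha => ?_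
  rw [Multiset.count_eq_zero.2 (by simpa using ha), pow_zero]

theorem multiset_eq_of_card_eq_of_count_mul_count_eq {s t : Multiset α}
    (hcard : Multiset.card s = Multiset.card t)
    (hcount : ∀ a b, s.count a * t.count b = t.count a * s.count b) : s = t := by
  rcases eq_or_ne t 0 with rfl | ht
  · simpa using hcard
  ext a
  have sum_count : s.count a * Multiset.card t = t.count a * Multiset.card s := by
    rw [← Multiset.sum_count_eq_card (s := s.toFinset ∪ t.toFinset) (m := t) (by simp +contextual),
      ← Multiset.sum_count_eq_card (s := s.toFinset ∪ t.toFinset) (m := s) (by simp +contextual),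
      Finset.mul_sum, Finset.mul_sum]
    exact Finset.sum_congr rfl fun b _ => hcount a b
  rw [hcard] at sum_count
  exact Nat.eq_of_mul_eq_mul_right (Multiset.card_pos.2 ht) sum_count

end Multisets

section GenericWeights

variable {ι K L : Type*} [Field K] [Field L] [Algebra K L] {w : ι → L} {a : ι}

variable (K) in
/-- A family is generic away from the index `a` if its members other than `w a` are algebraically
independent over `K`, while `w a` is a nonzero algebraic element; this is the general position
reached by perturbing a family whose value at `a` is prescribed. -/
structure IsGenericAwayFrom (w : ι → L) (a : ι) : Prop where
  algebraicIndependent : AlgebraicIndependent K fun i : {i // i ≠ a} => w i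
  isAlgebraic : IsAlgebraic K (w a)
  ne_zero : w a ≠ 0

theorem exists_isGenericAwayFrom [Finite ι] [Countable K] (a : ι) {c : L} (hc : IsAlgebraic K c)
    (hc0 : c ≠ 0) {s : ι → Set L} (hs : ∀ i ≠ a, ¬ (s i).Countable) :
    ∃ w : ι → L, IsGenericAwayFrom K w a ∧ w a = c ∧ ∀ i ≠ a, w i ∈ s i := by
  classical
  obtain ⟨v, hv, hvs⟩ := exists_algebraicIndependent_mem (R := K) fun i : {i // i ≠ a} => hs i i.2
  let w (i : ι) : L := if hi : i = a then c else v ⟨i, hi⟩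
  have hwa : w a = c := dif_pos rfl
  have hwv (i : {i // i ≠ a}) : w i = v i := dif_neg i.2
  exact ⟨w, ⟨by simpa only [hwv] using hv, hwa ▸ hc, hwa ▸ hc0⟩, hwa,
    fun i hi => hwv ⟨i, hi⟩ ▸ hvs ⟨i, hi⟩⟩

namespace IsGenericAwayFrom

theorem injective (hw : IsGenericAwayFrom K w a) : Function.Injective w := by
  have apply_ne (i : ι) (hi : i ≠ a) : w i ≠ w a := fun h =>
    hw.algebraicIndependent.transcendental ⟨i, hi⟩ (h ▸ hw.isAlgebraic)
  intro i j hij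
  by_cases hi : i = a <;> by_cases hj : j = a
  · rw [hi, hj]
  · exact absurd (hi ▸ hij).symm (apply_ne j hj)
  · exact absurd (hj ▸ hij) (apply_ne i hi)
  · simpa using hw.algebraicIndependent.injective (a₁ := ⟨i, hi⟩) (a₂ := ⟨j, hj⟩) hij

theorem enatCard_le_encard_add_one (hw : IsGenericAwayFrom K w a) {b : L} (hb : b ≠ 0)
    {s : Set L} (hs : ∀ j, IsAlgebraic (Algebra.adjoin K s) (1 + b * w j)) :
    ENat.card ι ≤ s.encard + 1 := by
  have isAlgebraic_b_mul (j : ι) : IsAlgebraic (Algebra.adjoin K s) (b * w j) := by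
    simpa using (hs j).sub isAlgebraic_one
  have isAlgebraic_b : IsAlgebraic (Algebra.adjoin K s) b := by
    have isAlgebraic_wa : IsAlgebraic (Algebra.adjoin K s) (w a) :=
      hw.isAlgebraic.extendScalars (FaithfulSMul.algebraMap_injective K _)
    simpa [hw.ne_zero] using (isAlgebraic_b_mul a).mul isAlgebraic_wa.inv
  have isAlgebraic_w (j : ι) : IsAlgebraic (Algebra.adjoin K s) (w j) := by
    simpa [hb] using isAlgebraic_b.inv.mul (isAlgebraic_b_mul j)
  calc ENat.card ι = ENat.card {i // i ≠ a} + 1 := by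
        rw [← Set.encard_univ, ← Set.encard_add_encard_compl {a}, Set.encard_singleton, add_comm]
        rfl
    _ ≤ s.encard + 1 := by
        gcongr
        exact enatCard_le_encard_of_isAlgebraic_adjoin hw.algebraicIndependent
          fun i => isAlgebraic_w i

theorem mul_eq_mul_of_prod_pow_eq_one [Fintype ι] (hw : IsGenericAwayFrom K w a) {b : L}
    (hb : b ≠ 0) {μ ν : ι → ℕ} (hμ : ∏ j, (1 + b * w j) ^ μ j = 1)
    (hν : ∏ j, (1 + b * w j) ^ ν j = 1) (i j : ι) : μ i * ν j = ν i * μ j := by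
  by_contra hij
  have hne : i ≠ j := by
    rintro rfl
    exact hij (mul_comm _ _)
  let x (j : ι) : L := 1 + b * w j
  have isAlgebraic_x (l : ι) : IsAlgebraic (Algebra.adjoin K (x '' {i, j}ᶜ)) (x l) := by
    by_cases hl : l ∈ ({i, j} : Set ι)
    · obtain rfl | rfl := hl
      · exact isAlgebraic_adjoin_of_prod_pow_eq_one hμ hν hij
      · rw [Set.pair_comm]
        refine isAlgebraic_adjoin_of_prod_pow_eq_one hν hμ ?_
        rwa [mul_comm, mul_comm (μ l)]
    · exact isAlgebraic_algebraMap
        (⟨x l, Algebra.subset_adjoin ⟨l, hl, rfl⟩⟩ : Algebra.adjoin K (x '' {i, j}ᶜ))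
  have card_le : (Set.univ : Set ι).encard ≤ ({i, j}ᶜ : Set ι).encard + 1 := by
    rw [Set.encard_univ]
    refine (hw.enatCard_le_encard_add_one hb isAlgebraic_x).trans ?_
    gcongr
    exact Set.encard_image_le x _
  rw [← Set.encard_add_encard_compl {i, j}, Set.encard_pair hne, add_comm,
    ENat.add_le_add_iff_left (Set.toFinite _).encard_lt_top.ne] at card_le
  exact absurd card_le (by decide)

theorem multiset_eq_of_prod_eq_one [Finite ι] (hw : IsGenericAwayFrom K w a) {b : L}
    (hb : b ≠ 0) {s t : Multiset ι} (hcard : Multiset.card s = Multiset.card t)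
    (hs : (s.map fun j => 1 + b * w j).prod = 1) (ht : (t.map fun j => 1 + b * w j).prod = 1) :
    s = t := by
  classical
  have := Fintype.ofFinite ι
  rw [multiset_prod_map_eq_prod_pow_count] at hs ht
  exact multiset_eq_of_card_eq_of_count_mul_count_eq hcard
    (hw.mul_eq_mul_of_prod_pow_eq_one hb hs ht)

end IsGenericAwayFrom

end GenericWeights

theorem exists_balanced_lengths {ι : Type*} [Fintype ι] {w l : ι → ℝ} (hl : ∀ i, 0 < l i)
    {a p : ι} (hap : w a + 1 ≤ w p) (hnonneg : 0 ≤ ∑ i, w i * l i)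
    (hlt : ∑ i, w i * l i < l p) :
    ∃ l' : ι → ℝ, (∀ i, 0 < l' i) ∧ ∑ i, l' i = ∑ i, l i ∧ ∑ i, w i * l' i = 0 ∧
      ∀ i, |l' i - l i| ≤ ∑ i, w i * l i := by
  classical
  set S := ∑ i, w i * l i
  have gap_pos : 0 < w p - w a := by linarith
  let t := S / (w p - w a)
  have ht0 : 0 ≤ t := by positivity
  have htS : t ≤ S := div_le_self hnonneg (by linarith)
  have ht_mul : t * (w p - w a) = S := div_mul_cancel₀ S gap_pos.ne'
  have single_mem (i j : ι) : (Pi.single i t : ι → ℝ) j ∈ Set.Icc 0 t := by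
    rw [Pi.single_apply]
    split_ifs <;> simp [ht0]
  refine ⟨l + (Pi.single a t - Pi.single p t), fun i => ?_, ?_, ?_, fun i => ?_⟩
  · rw [Pi.add_apply, Pi.sub_apply]
    rcases eq_or_ne i p with rfl | hi
    · rw [Pi.single_eq_same]
      linarith [(single_mem a i).1]
    · rw [Pi.single_eq_of_ne hi]
      linarith [(single_mem a i).1, hl i]
  · simp [Finset.sum_add_distrib]
  · have expand : ∑ i, w i * (l + (Pi.single a t - Pi.single p t) : ι → ℝ) i =
        S + (w a * t - w p * t) := by
      simp [S, mul_add, mul_sub, Finset.sum_add_distrib, Pi.single_apply]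
    linarith
  · rw [Pi.add_apply, add_sub_cancel_left, Pi.sub_apply, abs_le]
    constructor <;> linarith [(single_mem a i).1, (single_mem a i).2, (single_mem p i).1,
      (single_mem p i).2]

namespace TPL

variable {k : ℕ} {w l w' : Fin k → ℝ}

theorem pos (h : TPL k w l) : 0 < k := by
  obtain ⟨-, hsum, -⟩ := h
  rcases k.eq_zero_or_pos with rfl | hk
  · simp at hsum
  · exact hk

theorem exists_pos_weight (h : TPL k w l) : ∃ p, 0 < w p := by
  have ⟨hl, _, _, hw0, _, hwl⟩ := h
  obtain ⟨p, -, hp⟩ := Finset.exists_pos_of_sum_zero_of_exists_nonzero (fun i => w i * l i) hwl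
    ⟨⟨0, h.pos⟩, Finset.mem_univ _, by simp [hw0, (hl _).ne']⟩
  exact ⟨p, pos_of_mul_pos_left hp (hl p).le⟩

theorem sum_mul_mem_Icc (h : TPL k w l) {δ : ℝ} (hδ : ∀ i, w' i ∈ Set.Icc (w i) (w i + δ)) :
    ∑ i, w' i * l i ∈ Set.Icc 0 δ := by
  obtain ⟨hl, hsum, -, -, -, hwl⟩ := h
  constructor
  · calc 0 = ∑ i, w i * l i := hwl.symm
      _ ≤ ∑ i, w' i * l i := by gcongr with i; exacts [(hl i).le, (hδ i).1]
  · calc ∑ i, w' i * l i ≤ ∑ i, (w i + δ) * l i := by gcongr with i; exacts [(hl i).le, (hδ i).2]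
      _ = δ := by simp only [add_mul, Finset.sum_add_distrib, hwl, ← Finset.mul_sum, hsum]; ring

theorem exists_lengths_of_injective (h : TPL k w l) (hinj : Function.Injective w')
    (hw' : w' ⟨0, h.pos⟩ = -1) {δ : ℝ} (hδ : ∀ i, w' i ∈ Set.Icc (w i) (w i + δ))
    {p : Fin k} (hp : 0 ≤ w p) (hlt : δ < l p) :
    ∃ l' : Fin k → ℝ, TPL k w' l' ∧ ∀ i, |l' i - l i| ≤ δ := by
  obtain ⟨hS0, hSδ⟩ := h.sum_mul_mem_Icc hδ
  have ⟨hl, hsum, hw, _, hadj, _⟩ := h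
  have gap : w' ⟨0, h.pos⟩ + 1 ≤ w' p := by linarith [(hδ p).1]
  obtain ⟨l', hl', hsum', hwl', hdist⟩ :=
    exists_balanced_lengths hl gap hS0 (hSδ.trans_lt hlt)
  -- Adjacent weights of `w'` differ because `hadj` rules out that an index is its own successor.
  exact ⟨l', ⟨hl', hsum'.trans hsum, fun i => (hw i).trans (hδ i).1, fun _ => hw',
    fun i hi => hadj i (congrArg w (hinj hi)), hwl'⟩, fun i => (hdist i).trans hSδ⟩

theorem exists_isGenericAwayFrom_perturbation (h : TPL k w l) {ε : ℝ} (hε : 0 < ε) :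
    ∃ w' l' : Fin k → ℝ, TPL k w' l' ∧ (∀ i, |w' i - w i| + |l' i - l i| < ε) ∧
      IsGenericAwayFrom ℚ w' ⟨0, h.pos⟩ := by
  obtain ⟨p, hp⟩ := h.exists_pos_weight
  have ⟨hl, _, _, hw0, _, _⟩ := h
  obtain ⟨δ, hδ, hδ_lt⟩ : ∃ δ, 0 < δ ∧ δ < min (ε / 2) (l p) :=
    exists_between (lt_min (half_pos hε) (hl p))
  obtain ⟨hδε, hδl⟩ := lt_min_iff.1 hδ_lt
  obtain ⟨w', hgen, hw'0, hw'⟩ := exists_isGenericAwayFrom (K := ℚ) (⟨0, h.pos⟩ : Fin k)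
    (c := (-1 : ℝ)) isAlgebraic_one.neg (by simp) (s := fun i => Set.Ioo (w i) (w i + δ))
    fun i _ => by simpa [Cardinal.Real.Ioo_countable_iff] using hδ
  have hw'_mem (i : Fin k) : w' i ∈ Set.Icc (w i) (w i + δ) := by
    rcases eq_or_ne i ⟨0, h.pos⟩ with rfl | hi
    · simp [hw'0, hw0, hδ.le]
    · exact Set.Ioo_subset_Icc_self (hw' i hi)
  obtain ⟨l', hT, hdist⟩ := h.exists_lengths_of_injective hgen.injective hw'0 hw'_mem hp.le hδl
  refine ⟨w', l', hT, fun i => ?_, hgen⟩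
  have hw'_dist : |w' i - w i| ≤ δ := by
    rw [abs_le]
    constructor <;> linarith [(hw'_mem i).1, (hw'_mem i).2]
  linarith [hdist i]

end TPL

theorem stmt13_general {k : ℕ} {w l : Fin k → ℝ} (h : TPL k w l) {ε : ℝ} (hε : 0 < ε) :
    ∃ w' l' : Fin k → ℝ, TPL k w' l' ∧ (∀ i, |w' i - w i| + |l' i - l i| < ε) ∧
      Function.Injective w' ∧
      ∀ J₁ J₂ : Multiset (Fin k), Multiset.card J₁ = Multiset.card J₂ → ∀ b : ℝ, b ≠ 0 →
        (J₁.map fun j => 1 + b * w' j).prod = 1 → (J₂.map fun j => 1 + b * w' j).prod = 1 →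
        J₁ = J₂ := by
  obtain ⟨w', l', hT, hclose, hgen⟩ := h.exists_isGenericAwayFrom_perturbation hε
  exact ⟨w', l', hT, hclose, hgen.injective,
    fun _ _ hcard _ hb h₁ h₂ => hgen.multiset_eq_of_prod_eq_one hb hcard h₁ h₂⟩

/-- Perturbation lemma in `T̄^PL_k`, `k ≥ 4`: if `ŵ` has at least one
`(1/n)`-plausible multiset, then `(ŵ, ℓ̂)` can be perturbed arbitrarily little
inside `T̄^PL_k` to `(w̄, ℓ̄)` with pairwise distinct weights such that any two
distinct `(1/n)`-plausible multisets for `w̄` have distinct associated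
solutions in `[1/n, 1]`. -/
theorem stmt13 (k : ℕ) (hk : 4 ≤ k) (wh lh : Fin k → ℝ) (h : TPL k wh lh)
    (q : ℕ) (hq : 1 < q) (n : ℝ) (hn : 1 < n)
    (hplaus : ∃ J : Multiset (Fin k), Multiset.card J = q ∧
      ∃ y ∈ Set.Icc (1 / n) 1, (J.map (fun j => 1 + wh j * y)).prod = 1)
    (ε : ℝ) (hε : 0 < ε) :
    ∃ wb lb : Fin k → ℝ, TPL k wb lb ∧
      (∀ i, |wb i - wh i| + |lb i - lh i| < ε) ∧
      Function.Injective wb ∧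
      ∀ J₁ J₂ : Multiset (Fin k),
        Multiset.card J₁ = q → Multiset.card J₂ = q → J₁ ≠ J₂ →
        ∀ b₁ ∈ Set.Icc (1 / n) 1, ∀ b₂ ∈ Set.Icc (1 / n) 1,
          (J₁.map (fun j => 1 + b₁ * wb j)).prod = 1 →
          (J₂.map (fun j => 1 + b₂ * wb j)).prod = 1 →
          b₁ ≠ b₂ := by
  obtain ⟨w', l', hT, hclose, hinj, hJ⟩ := stmt13_general h hε
  refine ⟨w', l', hT, hclose, hinj, ?_⟩
  rintro J₁ J₂ h₁ h₂ hne b hb _ - hb₁ hb₂ rfl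
  have b_pos : 0 < b := lt_of_lt_of_le (by positivity) hb.1
  exact hne (hJ J₁ J₂ (h₁.trans h₂.symm) b b_pos.ne' hb₁ hb₂)
end

section
/- Let k ≥ 3. Then the set G of all (w, ℓ) ∈ T̄^PL_k such that for all coprime integers p, q with q ≥ 1, every b ∈ (0,1], and every ω ∈ ℝ, the q-th iterate of the map x ↦ x + ω + b·φ_{w,ℓ}(x) is not equal to x ↦ x + p, is a dense Gδ subset of T̄^PL_k with respect to the subspace topology inherited from ℝ^k × ℝ^k. (That is, the generic reduced standard-like piecewise linear forcing with k > 2 break points has no pinched rational Arnol'd tongues.) -/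
/-- The cumulative break points `c_i = ℓ_1 + ⋯ + ℓ_i`. -/
noncomputable def cum {k : ℕ} (l : Fin k → ℝ) (i : Fin k) : ℝ :=
  ∑ j ∈ Finset.Iic i, l j

/-- The 1-periodic continuous piecewise linear function `φ_{w,ℓ}` with
`φ_{w,ℓ}(0) = 0` and slope `w_i` on `[c_{i-1}, c_i]`. -/
noncomputable def phiWL {k : ℕ} (w l : Fin k → ℝ) (x : ℝ) : ℝ :=
  ∑ i : Fin k, w i *
    (min (Int.fract x) (cum l i) - min (Int.fract x) (cum l i - l i))

/-- The set of reduced PL data `(w, ℓ) ∈ T̄^PL_k` whose standard-like family has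
no pinched rational Arnol'd tongue. -/
def noPinchSet (k : ℕ) :
    Set {wl : (Fin k → ℝ) × (Fin k → ℝ) // TPL k wl.1 wl.2} :=
  {x | ∀ (p : ℤ) (q : ℕ), 1 ≤ q → Int.gcd p q = 1 →
    ∀ b ∈ Set.Ioc (0 : ℝ) 1, ∀ ω : ℝ,
      (fun y => y + ω + b * phiWL x.1.1 x.1.2 y)^[q] ≠ fun y => y + (p : ℝ)}

/-!
Suppose that a map `f` of the family satisfies `f^q = id + p`. The left derivatives of `f` multiply
to `1` along the first `q` points of every orbit, and so do the right derivatives; hence the orbit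
of a break point meets a second break point before time `q`, and coprimality of `p` and `q` makes
the two distinct modulo `1`. The orbit sum `H = ∑_{n < q} f^n` satisfies `H ∘ f = H + p`, so up to
integers it takes the same value at both. Let `K ⊆ ℝ` be a field that contains the slopes of `f`.
Between consecutive points of the backward orbits of the break points `H` is affine with slope in
`K`, so the differences of break points lie in the `K`-span of the differences of the values of `H`
at break points, all taken in `ℝ / K`. There are at most `k / 2` such values, which bounds the
dimension of the space spanned by the lengths in `ℝ / K`.

For rational weights, the product of the slopes along the orbit of `0` gives a polynomial equation
for `b`, which is nontrivial as it contains the factor `1 - b`; so `K` can be the countable field of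
real algebraic numbers. If all but two of the lengths are independent in `ℝ / K`, this contradicts
the bound as soon as `k ≥ 3`. Such data are dense, because the two remaining lengths can be used to
solve the two linear constraints. Finally, `f^q = id + p` is a closed condition on `(w, ℓ, b, ω)`,
and `(b, ω)` ranges over a `σ`-compact set.
-/

namespace TPL

variable {n : ℕ} {w l : Fin (n + 1) → ℝ} (hT : TPL (n + 1) w l)

include hT

lemma length_pos (i : Fin (n + 1)) : 0 < l i := hT.1 i

lemma sum_length : ∑ i, l i = 1 := hT.2.1

lemma neg_one_le_weight (i : Fin (n + 1)) : -1 ≤ w i := hT.2.2.1 i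

lemma weight_zero : w 0 = -1 := hT.2.2.2.1 n.succ_pos

lemma weight_ne_weight_add_one (i : Fin (n + 1)) : w i ≠ w (i + 1) := by
  simpa [Fin.add_def] using hT.2.2.2.2.1 i

lemma sum_weight_mul_length : ∑ i, w i * l i = 0 := hT.2.2.2.2.2

end TPL

namespace PLForcing

open Function Set Filter Topology Module

section Preliminaries

lemma isGδ_setOf_forall_notMem {X Y : Type*} [TopologicalSpace X] [TopologicalSpace Y]
    {A : Set (X × Y)} (hA : IsClosed A) {C : Set Y} (hC : IsSigmaCompact C) :
    IsGδ {x | ∀ y ∈ C, (x, y) ∉ A} := by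
  obtain ⟨D, hD, rfl⟩ := hC
  have hInter : {x | ∀ y ∈ ⋃ n, D n, (x, y) ∉ A} = ⋂ n, {x | ∀ y ∈ D n, (x, y) ∉ A} := by
    ext x
    simp only [mem_iUnion, mem_ofPred_eq, mem_iInter]
    exact ⟨fun h n y hy => h y ⟨n, hy⟩, fun h y ⟨n, hy⟩ => h n y hy⟩
  rw [hInter]
  refine .iInter_of_isOpen fun n => isOpen_iff_mem_nhds.2 fun x hx => ?_
  exact (hD n).eventually_forall_of_forall_eventually fun y hy =>
    hA.isOpen_compl.mem_nhds (hx y hy)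

lemma isAlgebraic_of_prod_one_add_mul_eq_one {K A ι : Type*} [Field K] [CommRing A] [Algebra K A]
    {s : Finset ι} {w : ι → K} {b : A} (hw : ∃ i ∈ s, w i ≠ 0)
    (h : ∏ i ∈ s, (1 + b * algebraMap K A (w i)) = 1) : IsAlgebraic K b := by
  obtain ⟨i, hi, hwi⟩ := hw
  refine ⟨∏ i ∈ s, (1 + Polynomial.X * Polynomial.C (w i)) - 1, fun h0 => ?_, ?_⟩
  · have heval := congrArg (Polynomial.eval (-(w i)⁻¹)) h0
    have hzero : ∏ i' ∈ s, (1 + -(w i)⁻¹ * w i') = 0 :=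
      Finset.prod_eq_zero hi (by rw [neg_mul, inv_mul_cancel₀ hwi, add_neg_cancel])
    simp only [Polynomial.eval_sub, Polynomial.eval_prod, Polynomial.eval_add, Polynomial.eval_one,
      Polynomial.eval_mul, Polynomial.eval_X, Polynomial.eval_C, Polynomial.eval_zero,
      hzero, zero_sub, neg_eq_zero, one_ne_zero] at heval
  · simp only [map_sub, map_prod, map_add, map_one, map_mul, Polynomial.aeval_X,
      Polynomial.aeval_C, h, sub_self]

lemma two_mul_finrank_vectorSpan_range_add_one_le (K : Type*) {V P ι : Type*} [DivisionRing K]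
    [AddCommGroup V] [Module K V] [AddTorsor V P] [Fintype ι] [Nonempty ι] {c : ι → P}
    (hc : ∀ i, ∃ j ≠ i, c j = c i) :
    2 * (finrank K (vectorSpan K (range c)) + 1) ≤ Fintype.card ι := by
  classical
  have hfib : ∀ y ∈ Finset.univ.image c, 2 ≤ (Finset.univ.filter (c · = y)).card := by
    intro y hy
    obtain ⟨i, -, rfl⟩ := Finset.mem_image.1 hy
    obtain ⟨j, hji, hj⟩ := hc i
    exact Finset.one_lt_card.2 ⟨j, by simp [hj], i, by simp, hji⟩
  have hcard : 2 * (Finset.univ.image c).card ≤ Fintype.card ι :=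
    Finset.mul_card_image_le_card Finset.univ 2 hfib
  have hpos : 0 < (Finset.univ.image c).card := (Finset.univ_nonempty.image c).card_pos
  have hrank := finrank_vectorSpan_image_finset_le K id (Finset.univ.image c)
    (Nat.succ_pred_eq_of_pos hpos).symm
  have hrange : ((Finset.univ.image c).image id : Set P) = range c := by simp
  rw [hrange] at hrank
  have hlt := (Nat.le_pred_iff_lt hpos).1 hrank
  omega

lemma sub_mem_of_forall_consecutive {G : Type*} [AddGroup G] [LinearOrder G] {S : Set G}
    (hS : ∀ a b, (S ∩ Icc a b).Finite) {W : AddSubgroup G}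
    (hW : ∀ u ∈ S, ∀ v ∈ S, u < v → Disjoint (Ioo u v) S → v - u ∈ W) {x y : G}
    (hx : x ∈ S) (hy : y ∈ S) : y - x ∈ W := by
  wlog hxy : x ≤ y generalizing x y
  · rw [← neg_sub]
    exact W.neg_mem (this hy hx (le_of_not_ge hxy))
  have hfin (a b : S) : (Icc a b).Finite :=
    ((hS a b).preimage Subtype.val_injective.injOn).subset fun z hz => ⟨z.2, hz⟩
  let _ : LocallyFiniteOrder S := .ofFiniteIcc hfin
  have hchain (u v : S) (huv : Relation.ReflTransGen (· ⋖ ·) u v) : (v : G) - u ∈ W := by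
    induction huv with
    | refl => simp
    | @tail v t _ hvt ih =>
      have hconsec : (t : G) - v ∈ W := hW v v.2 t t.2 hvt.lt <|
        disjoint_left.2 fun z hz hzS => hvt.2 (c := ⟨z, hzS⟩) hz.1 hz.2
      rw [← sub_add_sub_cancel]
      exact W.add_mem hconsec ih
  exact hchain ⟨x, hx⟩ ⟨y, hy⟩ (le_iff_reflTransGen_covBy.1 hxy)

lemma exists_linearIndependent_mkQ (K : Type*) {V : Type*} [DivisionRing K] [AddCommGroup V]
    [Module K V] [Countable K] [Uncountable V] (N : Submodule K V) [Module.Finite K N] (n : ℕ) :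
    ∃ e : Fin n → V, LinearIndependent K (N.mkQ ∘ e) := by
  have hquot : ¬ Module.Finite K (V ⧸ N) := fun _ =>
    have := Module.Finite.of_submodule_quotient N
    not_countable (Finsupp.Countable.of_moduleFinite (M := V) (R := K))
  have hrank : (n : Cardinal) ≤ Module.rank K (V ⧸ N) :=
    Cardinal.natCast_le_aleph0.trans (not_lt.1 (mt Module.rank_lt_aleph0_iff.1 hquot))
  obtain ⟨v, hv⟩ := Module.le_rank_iff.1 hrank
  choose e he using fun i => N.mkQ_surjective (v i)
  exact ⟨e, by rwa [show N.mkQ ∘ e = v from funext he]⟩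

lemma dense_setOf_linearIndependent_mkQ (K : Type*) [Field K] [Algebra K ℝ] [Countable K]
    (N : Submodule K ℝ) [Module.Finite K N] (n : ℕ) :
    Dense {t : Fin n → ℝ | LinearIndependent K (N.mkQ ∘ t)} := by
  have := (algebraMap K ℝ).charZero
  obtain ⟨e, he⟩ := exists_linearIndependent_mkQ K N n
  have hdense (i : Fin n) : Dense ((fun r : ℝ => r * e i) '' (range ((↑) : ℚ → ℝ) \ {0})) := by
    have hei : e i ≠ 0 := fun h => he.ne_zero i (by simp [h])
    exact (Homeomorph.mulRight₀ _ hei).surjective.denseRange.dense_image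
      (Homeomorph.mulRight₀ _ hei).continuous (Rat.denseRange_cast.sdiff_singleton 0)
  refine (dense_pi univ fun i _ => hdense i).mono fun t ht => ?_
  choose r hr hrt using fun i => ht i (mem_univ i)
  choose c hc using fun i => (hr i).1
  have hc0 (i) : (c i : K) ≠ 0 := Rat.cast_ne_zero.2 fun h => (hr i).2 (by simp [← hc, h])
  have hunits := he.units_smul fun i => Units.mk0 (c i : K) (hc0 i)
  have ht_eq (i) : t i = (c i : K) • e i := by simp [← hrt, ← hc, Algebra.smul_def]
  rwa [mem_ofPred_eq, funext ht_eq]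

end Preliminaries

section IteratedDerivatives

variable {𝕜 : Type*} [NontriviallyNormedField 𝕜] {f : 𝕜 → 𝕜} {s : 𝕜 → Set 𝕜}

lemma hasDerivWithinAt_iterate (hs : ∀ x, MapsTo f (s x) (s (f x)))
    (hf : ∀ x, DifferentiableWithinAt 𝕜 f (s x) x) (n : ℕ) (x : 𝕜) :
    HasDerivWithinAt f^[n] (∏ m ∈ Finset.range n, derivWithin f (s (f^[m] x)) (f^[m] x))
      (s x) x := by
  have hmaps (n : ℕ) : MapsTo f^[n] (s x) (s (f^[n] x)) := by
    induction n with
    | zero => exact mapsTo_id _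
    | succ n ih =>
      rw [iterate_succ']
      exact (hs _).comp ih
  induction n with
  | zero => simpa using hasDerivWithinAt_id x (s x)
  | succ n ih =>
    rw [iterate_succ', Finset.prod_range_succ, mul_comm]
    exact (hf _).hasDerivWithinAt.comp x ih (hmaps n)

lemma prod_derivWithin_eq_one_of_iterate_eq_add (hs : ∀ x, MapsTo f (s x) (s (f x)))
    (hf : ∀ x, DifferentiableWithinAt 𝕜 f (s x) x) {q : ℕ} {a : 𝕜} (hfq : f^[q] = (· + a)) {x : 𝕜}
    (hx : UniqueDiffWithinAt 𝕜 (s x) x) :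
    ∏ m ∈ Finset.range q, derivWithin f (s (f^[m] x)) (f^[m] x) = 1 := by
  have hiter := hasDerivWithinAt_iterate hs hf q x
  rw [hfq] at hiter
  exact hx.eq_deriv _ hiter ((hasDerivWithinAt_id x (s x)).add_const a)

lemma hasDerivWithinAt_of_sub_eq_mul {s t : Set 𝕜} {x c : 𝕜} (ht : t ∈ 𝓝[s] x)
    (h : ∀ y ∈ t, f y - f x = c * (y - x)) : HasDerivWithinAt f c s x := by
  have haffine : HasDerivWithinAt (fun y => f x + c * (y - x)) c s x := by
    simpa using (((hasDerivWithinAt_id x s).sub_const x).const_mul c).const_add (f x)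
  refine haffine.congr_of_eventuallyEq ?_ (by simp)
  filter_upwards [ht] with y hy
  rw [← h y hy, add_sub_cancel]

end IteratedDerivatives

section DegreeOne

variable {f : ℝ → ℝ} (hf : ∀ x, f (x + 1) = f x + 1)

include hf in
lemma iterate_add_intCast (n : ℕ) (x : ℝ) (m : ℤ) : f^[n] (x + m) = f^[n] x + m := by
  let F : AddConstMap ℝ ℝ 1 1 := ⟨f, hf⟩
  have hF := AddConstMapClass.map_add_int (F ^ n) x m
  rwa [AddConstMap.coe_pow] at hF

include hf in
lemma strictMono_of_iterate_injective (hcont : Continuous f) {q : ℕ} (hq : 0 < q)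
    (hinj : Injective f^[q]) : StrictMono f := by
  obtain ⟨q, rfl⟩ := Nat.exists_eq_succ_of_ne_zero hq.ne'
  have hfinj : Injective f := .of_comp (by rwa [iterate_succ] at hinj)
  refine (hcont.strictMono_of_inj hfinj).resolve_right fun hanti => ?_
  have := hanti (lt_add_one 0)
  rw [hf] at this
  linarith

end DegreeOne

section BreakSet

variable {ι : Type*}

/-- The lift to `ℝ` of a family of points `β i` of the circle `ℝ / ℤ`. -/
def breakSet (β : ι → ℝ) : Set ℝ := {x | ∃ i, ∃ m : ℤ, β i + m = x}

lemma mem_breakSet (β : ι → ℝ) (i : ι) : β i ∈ breakSet β := ⟨i, 0, by simp⟩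

lemma finite_breakSet_inter_Icc [Finite ι] (β : ι → ℝ) (a b : ℝ) :
    (breakSet β ∩ Icc a b).Finite := by
  have hfin (i : ι) : {m : ℤ | β i + m ∈ Icc a b}.Finite := by
    refine (finite_Icc ⌈a - β i⌉ ⌊b - β i⌋).subset fun m hm => ⟨?_, ?_⟩
    · exact Int.ceil_le.2 (by linarith [hm.1])
    · exact Int.le_floor.2 (by linarith [hm.2])
  refine (finite_iUnion fun i => (hfin i).image fun m : ℤ => β i + m).subset ?_
  rintro _ ⟨⟨i, m, rfl⟩, hm⟩
  exact mem_iUnion.2 ⟨i, m, hm, rfl⟩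

/-- The points one of whose first `q` iterates under `f` lies in `breakSet β`; between two
consecutive such points every `f^[n]` with `n ≤ q` has constant slope. -/
def preBreakSet (f : ℝ → ℝ) (q : ℕ) (β : ι → ℝ) : Set ℝ := {x | ∃ n < q, f^[n] x ∈ breakSet β}

lemma finite_preBreakSet_inter_Icc [Finite ι] {f : ℝ → ℝ} (hf : StrictMono f) (q : ℕ)
    (β : ι → ℝ) (a b : ℝ) : (preBreakSet f q β ∩ Icc a b).Finite := by
  have hfin (n : ℕ) : (f^[n] ⁻¹' (breakSet β ∩ Icc (f^[n] a) (f^[n] b))).Finite :=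
    (finite_breakSet_inter_Icc β _ _).preimage (hf.iterate n).injective.injOn
  refine ((Finset.range q).finite_toSet.biUnion fun n _ => hfin n).subset ?_
  rintro x ⟨⟨n, hn, hx⟩, hax, hxb⟩
  have hmono := (hf.iterate n).monotone
  exact mem_biUnion (Finset.mem_coe.2 (Finset.mem_range.2 hn)) ⟨hx, hmono hax, hmono hxb⟩

end BreakSet

/-- The class of a real number modulo the line `K ⊆ ℝ`, in which integers vanish; it is the
invariant that tells apart the break points of a piecewise linear map with slopes in `K`. -/
abbrev modScalars (K : Type*) [Field K] [Algebra K ℝ] : ℝ →ₗ[K] ℝ ⧸ (K ∙ (1 : ℝ)) :=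
  (K ∙ (1 : ℝ)).mkQ

lemma modScalars_intCast (K : Type*) [Field K] [Algebra K ℝ] (m : ℤ) :
    modScalars K (m : ℝ) = 0 := by
  rw [Submodule.mkQ_apply, Submodule.Quotient.mk_eq_zero]
  exact Submodule.mem_span_singleton.2 ⟨m, by simp [Algebra.smul_def]⟩

section OrbitSum

variable {f : ℝ → ℝ} {q : ℕ} {p : ℤ}

lemma birkhoffSum_iterate_of_iterate_eq_add {a : ℝ} (hfq : f^[q] = (· + a)) (n : ℕ) (x : ℝ) :
    birkhoffSum f id q (f^[n] x) = birkhoffSum f id q x + n • a := by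
  have hsemi : Semiconj (birkhoffSum f id q) f (· + a) := fun x => by
    have := birkhoffSum_apply_sub_birkhoffSum f id q x
    simp only [hfq, id_eq] at this
    linarith
  simpa only [add_right_iterate] using (hsemi.iterate_right n).eq x

lemma birkhoffSum_add_intCast (hf : ∀ x, f (x + 1) = f x + 1) (q : ℕ) (x : ℝ) (m : ℤ) :
    birkhoffSum f id q (x + m) = birkhoffSum f id q x + q * m := by
  simp [birkhoffSum, iterate_add_intCast hf, Finset.sum_add_distrib]

lemma modScalars_birkhoffSum_eq (K : Type*) [Field K] [Algebra K ℝ]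
    (hf : ∀ x, f (x + 1) = f x + 1) (hfq : f^[q] = (· + (p : ℝ))) {n : ℕ} {m : ℤ} {x y : ℝ}
    (h : f^[n] x = y + m) :
    modScalars K (birkhoffSum f id q x) = modScalars K (birkhoffSum f id q y) := by
  have hsum : birkhoffSum f id q x = birkhoffSum f id q y + ((q * m - n * p : ℤ) : ℝ) := by
    have := birkhoffSum_iterate_of_iterate_eq_add hfq n x
    rw [h, birkhoffSum_add_intCast hf, nsmul_eq_mul] at this
    push_cast
    linarith
  rw [hsum, map_add, modScalars_intCast, add_zero]

lemma mul_eq_mul_of_iterate_eq_add (hf : ∀ x, f (x + 1) = f x + 1)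
    (hfq : f^[q] = (· + (p : ℝ))) {n : ℕ} {m : ℤ} {x : ℝ} (h : f^[n] x = x + m) :
    q * m = n * p := by
  have hsum := birkhoffSum_iterate_of_iterate_eq_add hfq n x
  rw [h, birkhoffSum_add_intCast hf, add_right_inj, nsmul_eq_mul] at hsum
  exact_mod_cast hsum

end OrbitSum

/-- `f` is a lift of a degree one circle map that is one-sided differentiable, whose left and right
derivatives disagree exactly at the integer translates of the `β i`, and which is affine with slope
in `K` between two consecutive such points. -/
structure IsPLLift (K : Type*) [Field K] [Algebra K ℝ] {ι : Type*} (f : ℝ → ℝ) (β : ι → ℝ) :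
    Prop where
  map_add_one : ∀ x, f (x + 1) = f x + 1
  differentiableWithinAt_Iic : ∀ x, DifferentiableWithinAt ℝ f (Iic x) x
  differentiableWithinAt_Ici : ∀ x, DifferentiableWithinAt ℝ f (Ici x) x
  derivWithin_ne_iff : ∀ x, derivWithin f (Iic x) x ≠ derivWithin f (Ici x) x ↔ x ∈ breakSet β
  exists_slope : ∀ u v, u < v → Disjoint (Ioo u v) (breakSet β) →
    ∃ c : K, f v - f u = c • (v - u)

namespace IsPLLift

variable {K : Type*} [Field K] [Algebra K ℝ] {ι : Type*} {f : ℝ → ℝ} {β : ι → ℝ}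
  (hf : IsPLLift K f β)

include hf

lemma continuous : Continuous f := continuous_iff_continuousAt.2 fun x =>
  continuousAt_iff_continuous_left_right.2 ⟨(hf.differentiableWithinAt_Iic x).continuousWithinAt,
    (hf.differentiableWithinAt_Ici x).continuousWithinAt⟩

lemma exists_slope_iterate (hmono : StrictMono f) {q : ℕ} {u v : ℝ} (huv : u < v)
    (hdisj : Disjoint (Ioo u v) (preBreakSet f q β)) {n : ℕ} (hn : n < q) :
    ∃ c : K, f^[n] v - f^[n] u = c • (v - u) := by
  induction n with
  | zero => exact ⟨1, by simp⟩
  | succ n ih =>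
    obtain ⟨c, hc⟩ := ih (Nat.lt_of_succ_lt hn)
    have himage : Disjoint (Ioo (f^[n] u) (f^[n] v)) (breakSet β) := by
      refine disjoint_left.2 fun y hy hyβ => ?_
      obtain ⟨z, hz, rfl⟩ := intermediate_value_Ioo huv.le (hf.continuous.iterate n).continuousOn hy
      exact disjoint_left.1 hdisj hz ⟨n, Nat.lt_of_succ_lt hn, hyβ⟩
    obtain ⟨d, hd⟩ := hf.exists_slope _ _ (hmono.iterate n huv) himage
    exact ⟨d * c, by rw [iterate_succ_apply', iterate_succ_apply', hd, hc, mul_smul]⟩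

lemma exists_sub_eq_smul_birkhoffSum_sub (hmono : StrictMono f) {q : ℕ} (hq : 0 < q) {u v : ℝ}
    (huv : u < v) (hdisj : Disjoint (Ioo u v) (preBreakSet f q β)) :
    ∃ c : K, v - u = c • (birkhoffSum f id q v - birkhoffSum f id q u) := by
  have hslope (n : ℕ) : ∃ c : K, n < q → f^[n] v - f^[n] u = c • (v - u) := by
    by_cases hn : n < q
    · exact (hf.exists_slope_iterate hmono huv hdisj hn).imp fun _ hc _ => hc
    · exact ⟨0, (absurd · hn)⟩
  choose c hc using hslope
  have hsum : birkhoffSum f id q v - birkhoffSum f id q u =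
      (∑ n ∈ Finset.range q, c n) • (v - u) := by
    rw [birkhoffSum, birkhoffSum, ← Finset.sum_sub_distrib, Finset.sum_smul]
    exact Finset.sum_congr rfl fun n hn => hc n (Finset.mem_range.1 hn)
  have hlt : birkhoffSum f id q u < birkhoffSum f id q v :=
    Finset.sum_lt_sum_of_nonempty (Finset.nonempty_range_iff.2 hq.ne')
      fun n _ => hmono.iterate n huv
  have hne : ∑ n ∈ Finset.range q, c n ≠ 0 := fun h0 => by
    rw [h0, zero_smul, sub_eq_zero] at hsum
    exact hlt.ne' hsum
  exact ⟨_, by rw [hsum, inv_smul_smul₀ hne]⟩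

variable {q : ℕ} (hq : 0 < q)

include hq

section

variable {a : ℝ} (hfq : f^[q] = (· + a))

include hfq

lemma strictMono : StrictMono f :=
  strictMono_of_iterate_injective hf.map_add_one hf.continuous hq
    (hfq ▸ add_left_injective a)

lemma prod_derivWithin_Iic_eq_one (x : ℝ) :
    ∏ n ∈ Finset.range q, derivWithin f (Iic (f^[n] x)) (f^[n] x) = 1 :=
  prod_derivWithin_eq_one_of_iterate_eq_add (s := Iic)
    (fun _ _ hy => (hf.strictMono hq hfq).monotone hy)
    hf.differentiableWithinAt_Iic hfq (uniqueDiffOn_Iic x x self_mem_Iic)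

lemma prod_derivWithin_Ici_eq_one (x : ℝ) :
    ∏ n ∈ Finset.range q, derivWithin f (Ici (f^[n] x)) (f^[n] x) = 1 :=
  prod_derivWithin_eq_one_of_iterate_eq_add (s := Ici)
    (fun _ _ hy => (hf.strictMono hq hfq).monotone hy)
    hf.differentiableWithinAt_Ici hfq (uniqueDiffOn_Ici x x self_mem_Ici)

lemma exists_iterate_mem_breakSet {x : ℝ} (hx : x ∈ breakSet β) :
    ∃ n, 0 < n ∧ n < q ∧ f^[n] x ∈ breakSet β := by
  by_contra! hne
  have hleft := hf.prod_derivWithin_Iic_eq_one hq hfq x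
  have hright := hf.prod_derivWithin_Ici_eq_one hq hfq x
  obtain ⟨r, rfl⟩ := Nat.exists_eq_succ_of_ne_zero hq.ne'
  rw [Finset.prod_range_succ'] at hleft hright
  have hlater : ∏ n ∈ Finset.range r, derivWithin f (Iic (f^[n + 1] x)) (f^[n + 1] x) =
      ∏ n ∈ Finset.range r, derivWithin f (Ici (f^[n + 1] x)) (f^[n + 1] x) :=
    Finset.prod_congr rfl fun n hn => not_not.1 <| mt (hf.derivWithin_ne_iff _).1 <|
      hne (n + 1) n.succ_pos (Nat.succ_lt_succ (Finset.mem_range.1 hn))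
  rw [hlater, ← hright] at hleft
  exact (hf.derivWithin_ne_iff x).2 hx
    (mul_left_cancel₀ (left_ne_zero_of_mul_eq_one hright) hleft)

end

section

variable {p : ℤ} (hfq : f^[q] = (· + (p : ℝ)))

include hfq

lemma exists_ne_modScalars_birkhoffSum_eq (hpq : Int.gcd p q = 1) (i : ι) :
    ∃ j ≠ i, modScalars K (birkhoffSum f id q (β j)) =
      modScalars K (birkhoffSum f id q (β i)) := by
  obtain ⟨n, hn, hnq, j, m, hj⟩ := hf.exists_iterate_mem_breakSet hq hfq (mem_breakSet β i)
  refine ⟨j, ?_, (modScalars_birkhoffSum_eq K hf.map_add_one hfq hj.symm).symm⟩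
  rintro rfl
  have hperiod : (q : ℤ) * m = n * p := mul_eq_mul_of_iterate_eq_add hf.map_add_one hfq hj.symm
  have hdvd : (q : ℤ) ∣ n :=
    (Int.isCoprime_iff_gcd_eq_one.2 hpq).symm.dvd_of_dvd_mul_right ⟨m, hperiod.symm⟩
  exact hnq.not_ge (Nat.le_of_dvd hn (Int.natCast_dvd_natCast.1 hdvd))

lemma vectorSpan_modScalars_le [Finite ι] :
    vectorSpan K (range (modScalars K ∘ β)) ≤
      vectorSpan K (range (modScalars K ∘ birkhoffSum f id q ∘ β)) := by
  set W := vectorSpan K (range (modScalars K ∘ birkhoffSum f id q ∘ β))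
  have hmono := hf.strictMono hq hfq
  have hclass (x : ℝ) (hx : x ∈ preBreakSet f q β) : modScalars K (birkhoffSum f id q x) ∈
      range (modScalars K ∘ birkhoffSum f id q ∘ β) := by
    obtain ⟨n, -, i, m, hi⟩ := hx
    exact ⟨i, (modScalars_birkhoffSum_eq K hf.map_add_one hfq hi.symm).symm⟩
  have hgap (u) (hu : u ∈ preBreakSet f q β) (v) (hv : v ∈ preBreakSet f q β) (huv : u < v)
      (hdisj : Disjoint (Ioo u v) (preBreakSet f q β)) : v - u ∈ W.comap (modScalars K) := by
    obtain ⟨c, hc⟩ := hf.exists_sub_eq_smul_birkhoffSum_sub hmono hq huv hdisj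
    rw [Submodule.mem_comap, hc, map_smul, map_sub]
    exact W.smul_mem c (vsub_mem_vectorSpan K (hclass v hv) (hclass u hu))
  have hmem (i : ι) : β i ∈ preBreakSet f q β := ⟨0, hq, mem_breakSet β i⟩
  refine Submodule.span_le.2 ?_
  rintro _ ⟨_, ⟨i, rfl⟩, _, ⟨j, rfl⟩, rfl⟩
  have hij : β i - β j ∈ (W.comap (modScalars K)).toAddSubgroup :=
    sub_mem_of_forall_consecutive (finite_preBreakSet_inter_Icc hmono q β) hgap (hmem j) (hmem i)
  simpa using hij

theorem two_mul_finrank_vectorSpan_add_one_le [Fintype ι] [Nonempty ι] (hpq : Int.gcd p q = 1) :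
    2 * (finrank K (vectorSpan K (range (modScalars K ∘ β))) + 1) ≤ Fintype.card ι := by
  have hfinite : FiniteDimensional K (vectorSpan K
      (range (modScalars K ∘ birkhoffSum f id q ∘ β))) :=
    finiteDimensional_vectorSpan_range K _
  have hle := Submodule.finrank_mono (hf.vectorSpan_modScalars_le hq hfq)
  have htwo := two_mul_finrank_vectorSpan_range_add_one_le K
    (c := modScalars K ∘ birkhoffSum f id q ∘ β)
    (hf.exists_ne_modScalars_birkhoffSum_eq hq hfq hpq)
  omega

end

end IsPLLift

section BreakPoints

variable {n : ℕ} {w l : Fin (n + 1) → ℝ}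

/-- The left end `c_{i-1}` of the interval `[c_{i-1}, c_i]` on which `φ_{w,ℓ}` has slope `w_i`. -/
noncomputable def leftEnd (l : Fin (n + 1) → ℝ) (i : Fin (n + 1)) : ℝ := cum l i - l i

lemma leftEnd_eq_sum (l : Fin (n + 1) → ℝ) (i : Fin (n + 1)) :
    leftEnd l i = ∑ j ∈ Finset.Iio i, l j := by
  rw [leftEnd, cum, ← Finset.Iio_insert, Finset.sum_insert (by simp), add_sub_cancel_left]

lemma leftEnd_zero (l : Fin (n + 1) → ℝ) : leftEnd l 0 = 0 := by
  rw [leftEnd_eq_sum, ← bot_eq_zero, Finset.Iio_bot, Finset.sum_empty]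

lemma leftEnd_succ (l : Fin (n + 1) → ℝ) (i : Fin n) : leftEnd l i.succ = cum l i.castSucc := by
  rw [leftEnd_eq_sum, cum]
  congr 1

lemma cum_last (l : Fin (n + 1) → ℝ) : cum l (Fin.last n) = ∑ i, l i := by
  rw [cum, ← Fin.top_eq_last, Finset.Iic_top]

lemma leftEnd_nonneg (hl : ∀ i, 0 ≤ l i) (i : Fin (n + 1)) : 0 ≤ leftEnd l i := by
  rw [leftEnd_eq_sum]
  exact Finset.sum_nonneg fun j _ => hl j

lemma leftEnd_lt_cum {i : Fin (n + 1)} (hl : 0 < l i) : leftEnd l i < cum l i := sub_lt_self _ hl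

lemma cum_le_sum (hl : ∀ i, 0 ≤ l i) (i : Fin (n + 1)) : cum l i ≤ ∑ j, l j :=
  Finset.sum_le_univ_sum_of_nonneg hl

lemma cum_le_leftEnd (hl : ∀ i, 0 ≤ l i) {i j : Fin (n + 1)} (hij : i < j) :
    cum l i ≤ leftEnd l j := by
  rw [leftEnd_eq_sum]
  exact Finset.sum_le_sum_of_subset_of_nonneg
    (fun r hr => Finset.mem_Iio.2 ((Finset.mem_Iic.1 hr).trans_lt hij)) fun r _ _ => hl r

lemma exists_leftEnd_add_one_eq (hsum : ∑ i, l i = 1) (i : Fin (n + 1)) :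
    ∃ m : ℤ, leftEnd l (i + 1) = cum l i + m := by
  cases i using Fin.lastCases with
  | last => exact ⟨-1, by simp [leftEnd_zero, cum_last, hsum]⟩
  | cast i => exact ⟨0, by simp [leftEnd_succ]⟩

lemma cum_add_intCast_mem_breakSet (hsum : ∑ i, l i = 1) (i : Fin (n + 1)) (m : ℤ) :
    cum l i + m ∈ breakSet (leftEnd l) := by
  obtain ⟨r, hr⟩ := exists_leftEnd_add_one_eq hsum i
  exact ⟨i + 1, m - r, by rw [hr]; push_cast; ring⟩

lemma exists_mem_Ico_leftEnd_cum (hsum : ∑ i, l i = 1) (x : ℝ) :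
    ∃ i, ∃ m : ℤ, x ∈ Ico (leftEnd l i + m) (cum l i + m) := by
  suffices ∃ i, leftEnd l i ≤ Int.fract x ∧ Int.fract x < cum l i by
    obtain ⟨i, hleft, hright⟩ := this
    exact ⟨i, ⌊x⌋, le_sub_iff_add_le.1 hleft, sub_lt_iff_lt_add.1 hright⟩
  by_contra! hne
  have hcum (i : Fin (n + 1)) : cum l i ≤ Int.fract x := by
    induction i using Fin.induction with
    | zero => exact hne 0 (by simp [leftEnd_zero, Int.fract_nonneg])
    | succ i ih => exact hne i.succ ((leftEnd_succ l i).trans_le ih)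
  refine (Int.fract_lt_one x).not_ge ?_
  rw [← hsum, ← cum_last]
  exact hcum _

end BreakPoints

section Forcing

variable {n : ℕ} {w l : Fin (n + 1) → ℝ}

/-- The function on `[0, 1]` whose `1`-periodic extension is `φ_{w,ℓ}`. -/
noncomputable def profile (w l : Fin (n + 1) → ℝ) (z : ℝ) : ℝ :=
  ∑ i, w i * (min z (cum l i) - min z (leftEnd l i))

lemma profile_zero (hl : ∀ i, 0 ≤ l i) : profile w l 0 = 0 := by
  refine Finset.sum_eq_zero fun i _ => ?_
  have hleft := leftEnd_nonneg hl i
  have hcum : 0 ≤ cum l i := hleft.trans (sub_le_self _ (hl i))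
  rw [min_eq_left hleft, min_eq_left hcum, sub_self, mul_zero]

lemma profile_one (hl : ∀ i, 0 ≤ l i) (hsum : ∑ i, l i = 1) :
    profile w l 1 = ∑ i, w i * l i := by
  refine Finset.sum_congr rfl fun i _ => ?_
  have hcum : cum l i ≤ 1 := hsum ▸ cum_le_sum hl i
  have hleft : leftEnd l i ≤ 1 := (sub_le_self _ (hl i)).trans hcum
  rw [min_eq_right hleft, min_eq_right hcum, leftEnd, sub_sub_cancel]

lemma profile_sub_profile (hl : ∀ i, 0 ≤ l i) {i : Fin (n + 1)} {y z : ℝ}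
    (hy : y ∈ Icc (leftEnd l i) (cum l i)) (hz : z ∈ Icc (leftEnd l i) (cum l i)) :
    profile w l z - profile w l y = w i * (z - y) := by
  rw [profile, profile, ← Finset.sum_sub_distrib, Finset.sum_eq_single i]
  · rw [min_eq_left hy.2, min_eq_left hz.2, min_eq_right hy.1, min_eq_right hz.1]
    ring
  · intro j _ hji
    have hleft : leftEnd l j ≤ cum l j := sub_le_self _ (hl j)
    obtain hji | hij := hji.lt_or_gt
    · have hj := cum_le_leftEnd hl hji
      rw [min_eq_right (hj.trans hy.1), min_eq_right (hj.trans hz.1),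
        min_eq_right (hleft.trans (hj.trans hy.1)), min_eq_right (hleft.trans (hj.trans hz.1)),
        sub_self]
    · have hj := cum_le_leftEnd hl hij
      rw [min_eq_left ((hy.2.trans hj).trans hleft), min_eq_left ((hz.2.trans hj).trans hleft),
        min_eq_left (hy.2.trans hj), min_eq_left (hz.2.trans hj), sub_self, sub_self, sub_self]
  · exact fun hi => absurd (Finset.mem_univ i) hi

lemma phiWL_eq_profile_fract (w l : Fin (n + 1) → ℝ) (x : ℝ) :
    phiWL w l x = profile w l (Int.fract x) := rfl

lemma phiWL_add_intCast_of_mem_Icc (hT : TPL (n + 1) w l) {z : ℝ} (hz : z ∈ Icc (0 : ℝ) 1)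
    (m : ℤ) : phiWL w l (z + m) = profile w l z := by
  have hl (i) := (hT.length_pos i).le
  rw [phiWL_eq_profile_fract, Int.fract_add_intCast]
  obtain rfl | hz1 := eq_or_lt_of_le hz.2
  · rw [Int.fract_one, profile_zero hl, profile_one hl hT.sum_length, hT.sum_weight_mul_length]
  · rw [Int.fract_eq_self.2 ⟨hz.1, hz1⟩]

lemma phiWL_sub_phiWL (hT : TPL (n + 1) w l) {i : Fin (n + 1)} {m : ℤ} {x y : ℝ}
    (hx : x ∈ Icc (leftEnd l i + m) (cum l i + m)) (hy : y ∈ Icc (leftEnd l i + m) (cum l i + m)) :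
    phiWL w l y - phiWL w l x = w i * (y - x) := by
  have hl (i) := (hT.length_pos i).le
  have hshift {z : ℝ} (hz : z ∈ Icc (leftEnd l i + m) (cum l i + m)) :
      z - m ∈ Icc (leftEnd l i) (cum l i) := ⟨by linarith [hz.1], by linarith [hz.2]⟩
  have hunit : Icc (leftEnd l i) (cum l i) ⊆ Icc 0 1 :=
    Icc_subset_Icc (leftEnd_nonneg hl i) (hT.sum_length ▸ cum_le_sum hl i)
  have hprofile {z : ℝ} (hz : z ∈ Icc (leftEnd l i + m) (cum l i + m)) :
      phiWL w l z = profile w l (z - m) := by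
    rw [← phiWL_add_intCast_of_mem_Icc hT (hunit (hshift hz)) m, sub_add_cancel]
  rw [hprofile hx, hprofile hy, profile_sub_profile hl (hshift hx) (hshift hy),
    sub_sub_sub_cancel_right]

/-- The standard-like map `x ↦ x + ω + b φ_{w,ℓ}(x)`. -/
noncomputable def familyMap (w l : Fin (n + 1) → ℝ) (b ω x : ℝ) : ℝ := x + ω + b * phiWL w l x

section Continuity

variable {Z : Type*} [TopologicalSpace Z] {W L : Z → Fin (n + 1) → ℝ} {b ω x : Z → ℝ}
  (hW : Continuous W) (hL : Continuous L) (hT : ∀ z, TPL (n + 1) (W z) (L z))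

include hW hL hT

lemma continuous_phiWL (hx : Continuous x) : Continuous fun z => phiWL (W z) (L z) (x z) := by
  refine ContinuousOn.comp_fract (f := fun z y => profile (W z) (L z) y)
    (Continuous.continuousOn ?_) hx fun z => ?_
  · unfold uncurry profile leftEnd cum
    fun_prop
  · have hl (i) := ((hT z).length_pos i).le
    rw [profile_zero hl, profile_one hl (hT z).sum_length, (hT z).sum_weight_mul_length]

lemma continuous_iterate_familyMap (hb : Continuous b) (hω : Continuous ω) (hx : Continuous x)
    (q : ℕ) : Continuous fun z => (familyMap (W z) (L z) (b z) (ω z))^[q] (x z) := by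
  induction q with
  | zero => exact hx
  | succ q ih =>
    simp only [iterate_succ_apply', familyMap]
    exact (ih.add hω).add (hb.mul (continuous_phiWL hW hL hT ih))

end Continuity

section PiecewiseLinear

variable (hT : TPL (n + 1) w l) (b ω : ℝ)

lemma familyMap_add_one (w l : Fin (n + 1) → ℝ) (b ω x : ℝ) :
    familyMap w l b ω (x + 1) = familyMap w l b ω x + 1 := by
  rw [familyMap, familyMap, phiWL_eq_profile_fract, phiWL_eq_profile_fract, Int.fract_add_one]
  ring

include hT

lemma familyMap_sub_familyMap {i : Fin (n + 1)} {m : ℤ} {x y : ℝ}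
    (hx : x ∈ Icc (leftEnd l i + m) (cum l i + m)) (hy : y ∈ Icc (leftEnd l i + m) (cum l i + m)) :
    familyMap w l b ω y - familyMap w l b ω x = (1 + b * w i) * (y - x) := by
  rw [familyMap, familyMap, add_sub_add_comm, ← mul_sub, phiWL_sub_phiWL hT hx hy]
  ring

lemma hasDerivWithinAt_Ici_familyMap {i : Fin (n + 1)} {m : ℤ} {x : ℝ}
    (hx : x ∈ Ico (leftEnd l i + m) (cum l i + m)) :
    HasDerivWithinAt (familyMap w l b ω) (1 + b * w i) (Ici x) x :=
  hasDerivWithinAt_of_sub_eq_mul (Icc_mem_nhdsGE hx.2) fun _ hy =>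
    familyMap_sub_familyMap hT b ω (Ico_subset_Icc_self hx) ⟨hx.1.trans hy.1, hy.2⟩

lemma hasDerivWithinAt_Iic_familyMap {i : Fin (n + 1)} {m : ℤ} {x : ℝ}
    (hx : x ∈ Ioc (leftEnd l i + m) (cum l i + m)) :
    HasDerivWithinAt (familyMap w l b ω) (1 + b * w i) (Iic x) x :=
  hasDerivWithinAt_of_sub_eq_mul (Icc_mem_nhdsLE hx.1) fun _ hy =>
    familyMap_sub_familyMap hT b ω (Ioc_subset_Icc_self hx) ⟨hy.1, hy.2.trans hx.2⟩

lemma exists_hasDerivWithinAt_familyMap_of_mem_breakSet {x : ℝ} (hx : x ∈ breakSet (leftEnd l)) :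
    ∃ i, HasDerivWithinAt (familyMap w l b ω) (1 + b * w i) (Iic x) x ∧
      HasDerivWithinAt (familyMap w l b ω) (1 + b * w (i + 1)) (Ici x) x := by
  obtain ⟨j, m, rfl⟩ := hx
  obtain ⟨i, rfl⟩ : ∃ i, i + 1 = j := ⟨j - 1, sub_add_cancel j 1⟩
  refine ⟨i, ?_, hasDerivWithinAt_Ici_familyMap hT b ω (m := m)
    ⟨le_rfl, by linarith [leftEnd_lt_cum (hT.length_pos (i + 1))]⟩⟩
  obtain ⟨r, hr⟩ := exists_leftEnd_add_one_eq hT.sum_length i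
  refine hasDerivWithinAt_Iic_familyMap hT b ω (m := r + m) ?_
  push_cast
  rw [hr, add_assoc]
  exact ⟨by linarith [leftEnd_lt_cum (hT.length_pos i)], le_rfl⟩

lemma exists_hasDerivWithinAt_familyMap_of_notMem_breakSet {x : ℝ}
    (hx : x ∉ breakSet (leftEnd l)) :
    ∃ i, HasDerivWithinAt (familyMap w l b ω) (1 + b * w i) (Iic x) x ∧
      HasDerivWithinAt (familyMap w l b ω) (1 + b * w i) (Ici x) x := by
  obtain ⟨i, m, hleft, hright⟩ := exists_mem_Ico_leftEnd_cum hT.sum_length x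
  have hlt : leftEnd l i + m < x := hleft.lt_of_ne fun h => hx ⟨i, m, h⟩
  exact ⟨i, hasDerivWithinAt_Iic_familyMap hT b ω ⟨hlt, hright.le⟩,
    hasDerivWithinAt_Ici_familyMap hT b ω ⟨hleft, hright⟩⟩

lemma exists_hasDerivWithinAt_familyMap (x : ℝ) :
    ∃ i j, HasDerivWithinAt (familyMap w l b ω) (1 + b * w i) (Iic x) x ∧
      HasDerivWithinAt (familyMap w l b ω) (1 + b * w j) (Ici x) x := by
  by_cases hx : x ∈ breakSet (leftEnd l)
  · obtain ⟨i, hi⟩ := exists_hasDerivWithinAt_familyMap_of_mem_breakSet hT b ω hx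
    exact ⟨i, i + 1, hi⟩
  · obtain ⟨i, hi⟩ := exists_hasDerivWithinAt_familyMap_of_notMem_breakSet hT b ω hx
    exact ⟨i, i, hi⟩

variable {b}

lemma derivWithin_familyMap_ne_iff (hb : b ≠ 0) (x : ℝ) :
    derivWithin (familyMap w l b ω) (Iic x) x ≠ derivWithin (familyMap w l b ω) (Ici x) x ↔
      x ∈ breakSet (leftEnd l) := by
  have hIic := uniqueDiffOn_Iic x x self_mem_Iic
  have hIci := uniqueDiffOn_Ici x x self_mem_Ici
  refine ⟨fun hne => ?_, fun hx => ?_⟩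
  · by_contra hx
    obtain ⟨i, hleft, hright⟩ := exists_hasDerivWithinAt_familyMap_of_notMem_breakSet hT b ω hx
    exact hne ((hleft.derivWithin hIic).trans (hright.derivWithin hIci).symm)
  · obtain ⟨i, hleft, hright⟩ := exists_hasDerivWithinAt_familyMap_of_mem_breakSet hT b ω hx
    rw [hleft.derivWithin hIic, hright.derivWithin hIci]
    simpa [hb] using hT.weight_ne_weight_add_one i

lemma isPLLift_familyMap {K : Type*} [Field K] [Algebra K ℝ] (hb : b ≠ 0)
    (hslope : ∀ i, ∃ c : K, algebraMap K ℝ c = 1 + b * w i) :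
    IsPLLift K (familyMap w l b ω) (leftEnd l) where
  map_add_one := familyMap_add_one w l b ω
  differentiableWithinAt_Iic x :=
    have ⟨_, _, hleft, _⟩ := exists_hasDerivWithinAt_familyMap hT b ω x
    hleft.differentiableWithinAt
  differentiableWithinAt_Ici x :=
    have ⟨_, _, _, hright⟩ := exists_hasDerivWithinAt_familyMap hT b ω x
    hright.differentiableWithinAt
  derivWithin_ne_iff := derivWithin_familyMap_ne_iff hT ω hb
  exists_slope u v huv hdisj := by
    obtain ⟨i, m, hleft, hright⟩ := exists_mem_Ico_leftEnd_cum hT.sum_length u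
    have hv : v ≤ cum l i + m := not_lt.1 fun h => disjoint_left.1 hdisj ⟨hright, h⟩
      (cum_add_intCast_mem_breakSet hT.sum_length i m)
    refine (hslope i).imp fun c hc => ?_
    rw [Algebra.smul_def, hc, familyMap_sub_familyMap hT b ω ⟨hleft, hright.le⟩
      ⟨hleft.trans huv.le, hv⟩]

end PiecewiseLinear

end Forcing

section RationalWeights

lemma modScalars_length_mem_vectorSpan (K : Type*) [Field K] [Algebra K ℝ] {n : ℕ}
    {l : Fin (n + 1) → ℝ} (hsum : ∑ i, l i = 1) (i : Fin (n + 1)) :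
    modScalars K (l i) ∈ vectorSpan K (range (modScalars K ∘ leftEnd l)) := by
  obtain ⟨m, hm⟩ := exists_leftEnd_add_one_eq hsum i
  have hlength : l i = leftEnd l (i + 1) - leftEnd l i - m := by
    rw [hm, leftEnd]
    ring
  rw [hlength, map_sub, modScalars_intCast, sub_zero, map_sub]
  exact vsub_mem_vectorSpan K (mem_range_self (i + 1)) (mem_range_self i)

variable {n : ℕ} {w l : Fin (n + 1) → ℝ} (hT : TPL (n + 1) w l) {b ω : ℝ} (hb : b ≠ 0) {q : ℕ}
  (hq : 0 < q)

include hT hb hq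

lemma isAlgebraic_of_iterate_familyMap_eq_add {a : ℝ} (hfq : (familyMap w l b ω)^[q] = (· + a))
    {K : Type*} [Field K] [Algebra K ℝ] (hw : ∀ i, ∃ r : K, algebraMap K ℝ r = w i) :
    IsAlgebraic K b := by
  have hlift : IsPLLift ℝ (familyMap w l b ω) (leftEnd l) :=
    isPLLift_familyMap hT ω hb fun i => ⟨1 + b * w i, rfl⟩
  choose r hr using hw
  choose _ j _ hright using exists_hasDerivWithinAt_familyMap hT b ω
  have hderiv (x : ℝ) : derivWithin (familyMap w l b ω) (Ici x) x =
      1 + b * algebraMap K ℝ (r (j x)) := by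
    rw [(hright x).derivWithin (uniqueDiffOn_Ici x x self_mem_Ici), hr]
  have hzero : r (j 0) ≠ 0 := fun h0 => by
    have hmem : (0 : ℝ) ∈ Ico (leftEnd l 0 + (0 : ℤ)) (cum l 0 + (0 : ℤ)) := by
      simpa [leftEnd_zero] using leftEnd_lt_cum (hT.length_pos 0)
    have hcritical := hderiv 0
    rw [(hasDerivWithinAt_Ici_familyMap hT b ω hmem).derivWithin
      (uniqueDiffOn_Ici 0 0 self_mem_Ici), hT.weight_zero, h0, map_zero] at hcritical
    exact hb (by linarith)
  have hprod := hlift.prod_derivWithin_Ici_eq_one hq hfq 0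
  simp only [hderiv] at hprod
  exact isAlgebraic_of_prod_one_add_mul_eq_one ⟨0, Finset.mem_range.2 hq, hzero⟩ hprod

lemma two_mul_card_add_one_le_of_iterate_familyMap_eq_add {p : ℤ}
    (hfq : (familyMap w l b ω)^[q] = (· + (p : ℝ))) (hpq : Int.gcd p q = 1)
    {K : Type*} [Field K] [Algebra K ℝ] (hslope : ∀ i, ∃ c : K, algebraMap K ℝ c = 1 + b * w i)
    {s : Finset (Fin (n + 1))} (hs : LinearIndependent K fun i : s => modScalars K (l i)) :
    2 * (s.card + 1) ≤ n + 1 := by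
  have hspan : Submodule.span K (range fun i : s => modScalars K (l i)) ≤
      vectorSpan K (range (modScalars K ∘ leftEnd l)) :=
    Submodule.span_le.2 <| range_subset_iff.2 fun i =>
      modScalars_length_mem_vectorSpan K hT.sum_length i
  have hfinite : FiniteDimensional K (vectorSpan K (range (modScalars K ∘ leftEnd l))) :=
    finiteDimensional_vectorSpan_range K _
  have hcard : s.card ≤ finrank K (vectorSpan K (range (modScalars K ∘ leftEnd l))) := by
    simpa only [finrank_span_eq_card hs, Fintype.card_coe] using Submodule.finrank_mono hspan
  have hlift := isPLLift_familyMap hT ω hb hslope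
  have htwo := hlift.two_mul_finrank_vectorSpan_add_one_le hq hfq hpq
  rw [Fintype.card_fin] at htwo
  omega

lemma two_mul_card_add_one_le_of_rational_weights {p : ℤ}
    (hfq : (familyMap w l b ω)^[q] = (· + (p : ℝ))) (hpq : Int.gcd p q = 1)
    (hw : ∀ i, w i ∈ range ((↑) : ℚ → ℝ)) {s : Finset (Fin (n + 1))}
    (hs : LinearIndependent (algebraicClosure ℚ ℝ)
      fun i : s => modScalars (algebraicClosure ℚ ℝ) (l i)) :
    2 * (s.card + 1) ≤ n + 1 := by
  choose r hr using hw
  have hb_alg : b ∈ algebraicClosure ℚ ℝ := mem_algebraicClosure_iff.2 <|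
    isAlgebraic_of_iterate_familyMap_eq_add hT hb hq hfq fun i => ⟨r i, hr i⟩
  refine two_mul_card_add_one_le_of_iterate_familyMap_eq_add hT hb hq hfq hpq (fun i => ?_) hs
  exact ⟨1 + ⟨b, hb_alg⟩ * algebraMap ℚ _ (r i), by simp [← hr]⟩

end RationalWeights

section LengthCorrection

variable {ι : Type*} [Fintype ι] [DecidableEq ι]

/-- The vector obtained from `t` by changing the coordinates `a` and `c` only, in such a way that
for `w a ≠ w c` its coordinates sum to `1` and it is orthogonal to `w`. -/
noncomputable def correctLengths (a c : ι) (w t : ι → ℝ) : ι → ℝ :=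
  let δ := 1 - ∑ i, t i
  let β := -(∑ i, w i * t i + w a * δ) / (w c - w a)
  t + Pi.single a (δ - β) + Pi.single c β

lemma correctLengths_apply_of_ne {a c i : ι} (ha : i ≠ a) (hc : i ≠ c) (w t : ι → ℝ) :
    correctLengths a c w t i = t i := by
  simp [correctLengths, ha, hc]

lemma sum_correctLengths (a c : ι) (w t : ι → ℝ) : ∑ i, correctLengths a c w t i = 1 := by
  simp only [correctLengths, Pi.add_apply, Finset.sum_add_distrib, Finset.sum_pi_single',
    Finset.mem_univ, if_true]
  ring

lemma sum_mul_correctLengths {a c : ι} {w : ι → ℝ} (hw : w a ≠ w c) (t : ι → ℝ) :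
    ∑ i, w i * correctLengths a c w t i = 0 := by
  have hne : w c - w a ≠ 0 := sub_ne_zero.2 hw.symm
  simp only [correctLengths, Pi.add_apply, mul_add, Finset.sum_add_distrib, Pi.single_apply,
    mul_ite, mul_zero, Finset.sum_ite_eq', Finset.mem_univ, if_true]
  field_simp
  ring

lemma correctLengths_eq_self {a c : ι} {w t : ι → ℝ} (hsum : ∑ i, t i = 1)
    (hwt : ∑ i, w i * t i = 0) : correctLengths a c w t = t := by
  simp [correctLengths, hsum, hwt]

lemma continuousAt_correctLengths {a c : ι} {x : (ι → ℝ) × (ι → ℝ)} (hx : x.1 a ≠ x.1 c) :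
    ContinuousAt (fun y : (ι → ℝ) × (ι → ℝ) => correctLengths a c y.1 y.2) x := by
  have hne : x.1 c - x.1 a ≠ 0 := sub_ne_zero.2 hx.symm
  have hβ : ContinuousAt (fun y : (ι → ℝ) × (ι → ℝ) =>
      -(∑ i, y.1 i * y.2 i + y.1 a * (1 - ∑ i, y.2 i)) / (y.1 c - y.1 a)) x :=
    ContinuousAt.div (by fun_prop) (by fun_prop) hne
  have hδ : ContinuousAt (fun y : (ι → ℝ) × (ι → ℝ) => 1 - ∑ i, y.2 i) x := by fun_prop
  exact (continuousAt_snd.add ((continuous_single a).continuousAt.comp (hδ.sub hβ))).add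
    ((continuous_single c).continuousAt.comp hβ)

end LengthCorrection

section Density

variable {n : ℕ}

/-- The weight vector obtained from `w` by raising all entries to at least `-1` and setting
`w 0 = -1`. -/
noncomputable def clampWeights (w : Fin (n + 1) → ℝ) : Fin (n + 1) → ℝ :=
  update (fun i => max (w i) (-1)) 0 (-1)

lemma clampWeights_zero (w : Fin (n + 1) → ℝ) : clampWeights w 0 = -1 := update_self ..

lemma neg_one_le_clampWeights (w : Fin (n + 1) → ℝ) (i : Fin (n + 1)) :
    -1 ≤ clampWeights w i := by
  rcases eq_or_ne i 0 with rfl | hi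
  · exact (clampWeights_zero w).ge
  · simp [clampWeights, hi]

lemma clampWeights_mem_range_ratCast {w : Fin (n + 1) → ℝ} (hw : ∀ i, w i ∈ range ((↑) : ℚ → ℝ))
    (i : Fin (n + 1)) : clampWeights w i ∈ range ((↑) : ℚ → ℝ) := by
  rcases eq_or_ne i 0 with rfl | hi
  · exact ⟨-1, by simp [clampWeights_zero]⟩
  · obtain ⟨r, hr⟩ := hw i
    exact ⟨max r (-1), by simp [clampWeights, hi, ← hr]⟩

lemma clampWeights_eq_self {w : Fin (n + 1) → ℝ} (hw : ∀ i, -1 ≤ w i) (hw0 : w 0 = -1) :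
    clampWeights w = w := by
  rw [clampWeights, funext fun i => max_eq_left (hw i), ← hw0, update_eq_self]

lemma continuous_clampWeights : Continuous (clampWeights (n := n)) := by
  unfold clampWeights
  fun_prop

/-- A retraction of weight-length pairs onto the pairs satisfying the closed conditions that define
`T̄^PL`; the retracted lengths differ from the given ones at the indices `0` and `1` only. -/
noncomputable def normalizeData (x : (Fin (n + 1) → ℝ) × (Fin (n + 1) → ℝ)) :
    (Fin (n + 1) → ℝ) × (Fin (n + 1) → ℝ) :=
  (clampWeights x.1, correctLengths 0 1 (clampWeights x.1) x.2)

lemma normalizeData_eq_self {x : (Fin (n + 1) → ℝ) × (Fin (n + 1) → ℝ)} (hx : TPL (n + 1) x.1 x.2) :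
    normalizeData x = x := by
  rw [normalizeData, clampWeights_eq_self hx.neg_one_le_weight hx.weight_zero,
    correctLengths_eq_self hx.sum_length hx.sum_weight_mul_length]

lemma continuousAt_normalizeData {x : (Fin (n + 1) → ℝ) × (Fin (n + 1) → ℝ)}
    (hx : TPL (n + 1) x.1 x.2) : ContinuousAt normalizeData x := by
  have hclamp : Continuous fun y : (Fin (n + 1) → ℝ) × (Fin (n + 1) → ℝ) => clampWeights y.1 :=
    continuous_clampWeights.comp continuous_fst
  have hne : clampWeights x.1 0 ≠ clampWeights x.1 1 := by
    simpa [clampWeights_eq_self hx.neg_one_le_weight hx.weight_zero] using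
      hx.weight_ne_weight_add_one 0
  exact hclamp.continuousAt.prodMk <| ContinuousAt.comp_of_eq
    (f := fun y : (Fin (n + 1) → ℝ) × (Fin (n + 1) → ℝ) => (clampWeights y.1, y.2))
    (continuousAt_correctLengths hne) (hclamp.prodMk continuous_snd).continuousAt rfl

lemma tpl_normalizeData {x : (Fin (n + 1) → ℝ) × (Fin (n + 1) → ℝ)}
    (hpos : ∀ i, 0 < (normalizeData x).2 i)
    (hne : ∀ i, (normalizeData x).1 i ≠ (normalizeData x).1 (i + 1)) :
    TPL (n + 1) (normalizeData x).1 (normalizeData x).2 :=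
  ⟨hpos, sum_correctLengths .., neg_one_le_clampWeights x.1, fun _ => clampWeights_zero x.1,
    fun i => by simpa [Fin.add_def] using hne i,
    sum_mul_correctLengths (by simpa using hne 0) x.2⟩

lemma eventually_tpl_normalizeData {x : (Fin (n + 1) → ℝ) × (Fin (n + 1) → ℝ)}
    (hx : TPL (n + 1) x.1 x.2) :
    ∀ᶠ y in 𝓝 x, TPL (n + 1) (normalizeData y).1 (normalizeData y).2 := by
  have hlim : Tendsto normalizeData (𝓝 x) (𝓝 x) := by
    simpa only [ContinuousAt, normalizeData_eq_self hx] using continuousAt_normalizeData hx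
  have hpos : ∀ᶠ y in 𝓝 x, ∀ i, 0 < y.2 i := eventually_all.2 fun i =>
    continuousAt_const.eventually_lt (by fun_prop) (hx.length_pos i)
  have hne : ∀ᶠ y in 𝓝 x, ∀ i, y.1 i ≠ y.1 (i + 1) := eventually_all.2 fun i =>
    (isOpen_ne_fun (by fun_prop) (by fun_prop)).mem_nhds (hx.weight_ne_weight_add_one i)
  filter_upwards [hlim.eventually hpos, hlim.eventually hne] with y using tpl_normalizeData

end Density

/-- The analogue of `noPinchSet` in which the parameter `b` of the family ranges over `B` instead
of `(0, 1]`. -/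
def noPinchSetOn (k : ℕ) (B : Set ℝ) :
    Set {wl : (Fin k → ℝ) × (Fin k → ℝ) // TPL k wl.1 wl.2} :=
  {x | ∀ (p : ℤ) (q : ℕ), 1 ≤ q → Int.gcd p q = 1 → ∀ b ∈ B, ∀ ω : ℝ,
    (fun y => y + ω + b * phiWL x.1.1 x.1.2 y)^[q] ≠ fun y => y + (p : ℝ)}

section NoPinch

variable {n : ℕ} {B : Set ℝ}

lemma mem_noPinchSetOn_of_rational_weights (hn : 2 ≤ n) (hB : 0 ∉ B)
    {x : {wl : (Fin (n + 1) → ℝ) × (Fin (n + 1) → ℝ) // TPL (n + 1) wl.1 wl.2}}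
    (hw : ∀ i, x.1.1 i ∈ range ((↑) : ℚ → ℝ)) {s : Finset (Fin (n + 1))} (hcard : n ≤ s.card + 1)
    (hs : LinearIndependent (algebraicClosure ℚ ℝ)
      fun i : s => modScalars (algebraicClosure ℚ ℝ) (x.1.2 i)) :
    x ∈ noPinchSetOn (n + 1) B := by
  intro p q hq hpq b hb ω hfq
  have := two_mul_card_add_one_le_of_rational_weights x.2 (ne_of_mem_of_not_mem hb hB) hq hfq hpq
    hw hs
  omega

lemma dense_noPinchSetOn (hn : 2 ≤ n) (hB : 0 ∉ B) : Dense (noPinchSetOn (n + 1) B) := by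
  set K := algebraicClosure ℚ ℝ
  have : Countable K := (Algebraic.countable ℚ ℝ).mono fun _ => mem_algebraicClosure_iff.1
  have hweights : Dense (univ.pi fun _ : Fin (n + 1) => range ((↑) : ℚ → ℝ)) :=
    dense_pi univ fun _ _ => Rat.denseRange_cast
  have hparam := hweights.prod (dense_setOf_linearIndependent_mkQ K (K ∙ (1 : ℝ)) (n + 1))
  refine dense_iff_inter_open.2 ?_
  rintro _ ⟨V, hV, rfl⟩ ⟨x, hx⟩
  have hlim : Tendsto normalizeData (𝓝 x.1) (𝓝 x.1) := by
    simpa only [ContinuousAt, normalizeData_eq_self x.2] using continuousAt_normalizeData x.2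
  obtain ⟨y, ⟨hyV, hyT⟩, hw, ht⟩ := mem_closure_iff_nhds.1 (hparam x.1) _
    ((hlim.eventually (hV.mem_nhds hx)).and (eventually_tpl_normalizeData x.2))
  refine ⟨⟨normalizeData y, hyT⟩, hyV, mem_noPinchSetOn_of_rational_weights hn hB
    (clampWeights_mem_range_ratCast fun i => hw i (mem_univ i)) (s := {0, 1}ᶜ) ?_ ?_⟩
  · have := Finset.card_le_two (a := (0 : Fin (n + 1))) (b := 1)
    rw [Finset.card_compl, Fintype.card_fin]
    omega
  · convert ht.comp _ Subtype.val_injective using 1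
    funext ⟨i, hi⟩
    simp only [Finset.mem_compl, Finset.mem_insert, Finset.mem_singleton, not_or] at hi
    exact congrArg _ (correctLengths_apply_of_ne hi.1 hi.2 _ _)

lemma isClosed_setOf_iterate_familyMap_eq_add (n q : ℕ) (p : ℤ) :
    IsClosed {x : {wl : (Fin (n + 1) → ℝ) × (Fin (n + 1) → ℝ) // TPL (n + 1) wl.1 wl.2} × ℝ × ℝ |
      (familyMap x.1.1.1 x.1.1.2 x.2.1 x.2.2)^[q] = (· + (p : ℝ))} := by
  simp only [funext_iff, ofPred_forall]
  exact isClosed_iInter fun y => isClosed_eq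
    (continuous_iterate_familyMap (by fun_prop) (by fun_prop) (fun x => x.1.2) (by fun_prop)
      (by fun_prop) continuous_const q) continuous_const

lemma isGδ_noPinchSetOn (n : ℕ) (hB : IsSigmaCompact B) : IsGδ (noPinchSetOn (n + 1) B) := by
  have hBω : IsSigmaCompact (B ×ˢ (univ : Set ℝ)) := by
    have := isSigmaCompact_iff_sigmaCompactSpace.1 hB
    simpa [range_prodMap] using
      isSigmaCompact_range (f := Prod.map ((↑) : B → ℝ) (id : ℝ → ℝ)) (by fun_prop)
  have hinter : noPinchSetOn (n + 1) B = ⋂ (p : ℤ) (q : ℕ) (_ : 1 ≤ q) (_ : Int.gcd p q = 1),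
      {x | ∀ y ∈ B ×ˢ (univ : Set ℝ),
        (x, y) ∉ {x | (familyMap x.1.1.1 x.1.1.2 x.2.1 x.2.2)^[q] = (· + (p : ℝ))}} := by
    ext x
    simp only [mem_iInter]
    exact forall₄_congr fun p q _ _ => ⟨fun h y hy => h y.1 hy.1 y.2,
      fun h b hb ω => h (b, ω) ⟨hb, mem_univ ω⟩⟩
  rw [hinter]
  exact .iInter fun p => .iInter fun q => .iInter fun _ => .iInter fun _ =>
    isGδ_setOf_forall_notMem (isClosed_setOf_iterate_familyMap_eq_add n q p) hBω

end NoPinch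

end PLForcing

theorem stmt14_general (k : ℕ) (hk : 3 ≤ k) {B : Set ℝ} (hB : IsSigmaCompact B) (hB0 : 0 ∉ B) :
    Dense (PLForcing.noPinchSetOn k B) ∧ IsGδ (PLForcing.noPinchSetOn k B) := by
  obtain ⟨n, rfl⟩ := Nat.exists_eq_add_of_le' (Nat.one_le_of_lt hk)
  exact ⟨PLForcing.dense_noPinchSetOn (Nat.le_of_succ_le_succ hk) hB0,
    PLForcing.isGδ_noPinchSetOn n hB⟩

/-- Genericity of no pinching for PL forcings with `k > 2` break points: the set
of `(w, ℓ) ∈ T̄^PL_k` whose family has no pinched rational tongue is a dense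
`Gδ` in `T̄^PL_k` with the subspace topology from `ℝ^k × ℝ^k`. -/
theorem stmt14 (k : ℕ) (hk : 3 ≤ k) :
    Dense (noPinchSet k) ∧ IsGδ (noPinchSet k) := by
  have : LocallyCompactSpace (Set.Ioc (0 : ℝ) 1) := isLocallyClosed_Ioc.locallyCompactSpace
  exact stmt14_general k hk (isSigmaCompact_iff_sigmaCompactSpace.2 inferInstance) (by simp)
end

section
/- Let g : ℝ → ℝ be a lift of a piecewise linear degree-one circle homeomorphism with k ≥ 2 break points 0 = t_1 < … < t_k < 1 and slopes s_1, …, s_k, let p, q be coprime integers with q ≥ 1, and suppose the translation number of g equals p/q. Then the q-th iterate of g equals the translation x ↦ x + p if and only if for every i ∈ {1,…,k}: g^[q](t_i) = t_i + p, and there exist j_u, j_d ∈ {0,…,q−1} and indices u, d ∈ {1,…,k} with g^[j_u](t_i) − t_u ∈ ℤ and g^[j_d](t_i) − t_d ∈ ℤ, where t_u is a break point of type up and t_d is a break point of type down; i.e., every break point of g lies on a p/q-periodic orbit that contains break points of both types. -/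
/-- The right endpoint of the interval of definition starting at the break point
`t_i`: the next break point, or `t_1 + 1` for the last interval. -/
noncomputable def nextPt {k : ℕ} (t : Fin k → ℝ) (i : Fin k) : ℝ :=
  if h : (i : ℕ) + 1 < k then t ⟨(i : ℕ) + 1, h⟩ else t ⟨0, i.pos⟩ + 1

/-- The index preceding `i` mod `k`. -/
def prevIdx {k : ℕ} (i : Fin k) : Fin k :=
  ⟨((i : ℕ) + k - 1) % k, Nat.mod_lt _ i.pos⟩

/-!
If `f^[q]` is a translation, it has derivative `1` at every point. By the chain rule its left and
right derivatives at a break point `x` are the products of the left, respectively right, slopes of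
`f` along `x, f x, …, f^[q-1] x`. The two products agree although their factors at `x` itself
differ, so the right slope exceeds the left one at some point of the orbit and is smaller at
another.

Conversely, let `f^[q]` send every break point `x` to `x + p`, and suppose some point is not sent
to its translate by `p`. Consider the maximal interval around it on which this happens for every
point. Since `f^[q]` commutes with `f`, no iterate of the interval contains a break point, so
`f^[q]` is affine on its closure. As it agrees with the translation at both end points, it agrees
with it in between, a contradiction.
-/

open Set Function

section Order

theorem exists_mem_Ioo_disjoint_of_notMem {α : Type*} [ConditionallyCompleteLinearOrder α]
    [TopologicalSpace α] [OrderTopology α] {E : Set α} (hE : IsClosed E) {x : α} (hx : x ∉ E)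
    (hl : (E ∩ Iic x).Nonempty) (hr : (E ∩ Ici x).Nonempty) :
    ∃ a ∈ E, ∃ b ∈ E, x ∈ Ioo a b ∧ Disjoint (Ioo a b) E := by
  obtain ⟨⟨haE, hax⟩, ha⟩ := (hE.inter isClosed_Iic).isGreatest_csSup hl ⟨x, fun _ hy => hy.2⟩
  obtain ⟨⟨hbE, hxb⟩, hb⟩ := (hE.inter isClosed_Ici).isLeast_csInf hr ⟨x, fun _ hy => hy.2⟩
  refine ⟨_, haE, _, hbE, ⟨hax.lt_of_ne fun h => hx (h ▸ haE), hxb.lt_of_ne fun h => hx (h ▸ hbE)⟩,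
    disjoint_left.2 fun y hy hyE => ?_⟩
  rcases le_total y x with hyx | hxy
  · exact hy.1.not_ge (ha ⟨hyE, hyx⟩)
  · exact hy.2.not_ge (hb ⟨hyE, hxy⟩)

theorem exists_lt_of_prod_eq_prod {ι R : Type*} [CommSemiring R] [LinearOrder R]
    [IsStrictOrderedRing R] {I : Finset ι} {a b : ι → R} (hb : ∀ i ∈ I, 0 < b i)
    (hprod : ∏ i ∈ I, a i = ∏ i ∈ I, b i) {i : ι} (hi : i ∈ I) (hne : a i ≠ b i) :
    ∃ j ∈ I, a j < b j := by
  by_contra! hle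
  exact (Finset.prod_lt_prod hb hle ⟨i, hi, (hle i hi).lt_of_ne' hne⟩).ne' hprod

end Order

section OneSidedDerivatives

/-- The left derivative of `f` at `x`, taken within `Iic x` because a monotone `f` maps `Iic x` into
`Iic (f x)`, as the chain rule for iterates requires; `Iio x` would need strict monotonicity. -/
noncomputable def leftDeriv (f : ℝ → ℝ) (x : ℝ) : ℝ :=
  derivWithin f (Iic x) x

/-- The right derivative of `f` at `x`, taken within `Ici x` for the same reason. -/
noncomputable def rightDeriv (f : ℝ → ℝ) (x : ℝ) : ℝ :=
  derivWithin f (Ici x) x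

theorem leftDeriv_eq {f : ℝ → ℝ} {c x : ℝ} (h : HasDerivWithinAt f c (Iic x) x) :
    leftDeriv f x = c :=
  h.derivWithin (uniqueDiffWithinAt_Iic x)

theorem rightDeriv_eq {f : ℝ → ℝ} {c x : ℝ} (h : HasDerivWithinAt f c (Ici x) x) :
    rightDeriv f x = c :=
  h.derivWithin (uniqueDiffWithinAt_Ici x)

theorem hasDerivWithinAt_iterate {𝕜 : Type*} [NontriviallyNormedField 𝕜] {f f' : 𝕜 → 𝕜}
    {S : 𝕜 → Set 𝕜} (hS : ∀ y, MapsTo f (S y) (S (f y)))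
    (hf : ∀ y, HasDerivWithinAt f (f' y) (S y) y) (n : ℕ) (x : 𝕜) :
    HasDerivWithinAt f^[n] (∏ j ∈ Finset.range n, f' (f^[j] x)) (S x) x := by
  have hmaps : ∀ m, MapsTo f^[m] (S x) (S (f^[m] x)) := fun m => by
    induction m with
    | zero => exact mapsTo_id _
    | succ m ih =>
      rw [iterate_succ_apply', iterate_succ']
      exact (hS _).comp ih
  induction n with
  | zero => simpa using hasDerivWithinAt_id x (S x)
  | succ n ih =>
    rw [Finset.prod_range_succ, mul_comm, iterate_succ']
    exact (hf _).comp x ih (hmaps n)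

variable {f : ℝ → ℝ} {q : ℕ} {x : ℝ}

theorem prod_leftDeriv_eq_prod_rightDeriv (hf : Monotone f)
    (hl : ∀ y, DifferentiableWithinAt ℝ f (Iic y) y)
    (hr : ∀ y, DifferentiableWithinAt ℝ f (Ici y) y) (hq : DifferentiableAt ℝ f^[q] x) :
    ∏ j ∈ Finset.range q, leftDeriv f (f^[j] x) = ∏ j ∈ Finset.range q, rightDeriv f (f^[j] x) := by
  have hleft := hasDerivWithinAt_iterate (S := Iic) (fun _ _ hz => hf hz)
    (fun y => (hl y).hasDerivWithinAt) q x
  have hright := hasDerivWithinAt_iterate (S := Ici) (fun _ _ hz => hf hz)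
    (fun y => (hr y).hasDerivWithinAt) q x
  exact ((uniqueDiffWithinAt_Iic x).eq_deriv _ hleft hq.hasDerivAt.hasDerivWithinAt).trans
    ((uniqueDiffWithinAt_Ici x).eq_deriv _ hright hq.hasDerivAt.hasDerivWithinAt).symm

end OneSidedDerivatives

section Slope

/-- `f` is affine with slope `c` on `S`. Stated through increments, so that neither an intercept nor
a base point has to be carried along compositions and translations. -/
def HasSlopeOn (f : ℝ → ℝ) (c : ℝ) (S : Set ℝ) : Prop :=
  ∀ x ∈ S, ∀ y ∈ S, f y - f x = c * (y - x)

namespace HasSlopeOn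

variable {f g : ℝ → ℝ} {a b c d x : ℝ} {S T : Set ℝ}

theorem mono (h : HasSlopeOn f c T) (hST : S ⊆ T) : HasSlopeOn f c S :=
  fun x hx y hy => h x (hST hx) y (hST hy)

theorem comp (hg : HasSlopeOn g d T) (hf : HasSlopeOn f c S) (hST : MapsTo f S T) :
    HasSlopeOn (g ∘ f) (d * c) S := fun x hx y hy => by
  rw [comp_apply, comp_apply, hg _ (hST hx) _ (hST hy), hf x hx y hy, mul_assoc]

theorem hasDerivWithinAt (h : HasSlopeOn f c S) (hx : x ∈ S) : HasDerivWithinAt f c S x := by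
  have haff : HasDerivWithinAt (fun y => f x + c * (y - x)) c S x := by
    simpa using ((((hasDerivAt_id x).sub_const x).const_mul c).const_add (f x)).hasDerivWithinAt
  exact haff.congr (fun y hy => by linarith [h x hx y hy]) (by simp)

theorem hasDerivWithinAt_Iic (h : HasSlopeOn f c (Icc a b)) (hx : x ∈ Ioc a b) :
    HasDerivWithinAt f c (Iic x) x :=
  (h.hasDerivWithinAt (Ioc_subset_Icc_self hx)).mono_of_mem_nhdsWithin (Icc_mem_nhdsLE_of_mem hx)

theorem hasDerivWithinAt_Ici (h : HasSlopeOn f c (Icc a b)) (hx : x ∈ Ico a b) :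
    HasDerivWithinAt f c (Ici x) x :=
  (h.hasDerivWithinAt (Ico_subset_Icc_self hx)).mono_of_mem_nhdsWithin (Icc_mem_nhdsGE_of_mem hx)

theorem eq_add_of_eq_add (h : HasSlopeOn f c (Icc a b)) (ha : f a = a + d) (hb : f b = b + d)
    (hx : x ∈ Ioo a b) : f x = x + d := by
  have hab : a < b := hx.1.trans hx.2
  have hc : c = 1 := by
    have hslope := h a (left_mem_Icc.2 hab.le) b (right_mem_Icc.2 hab.le)
    refine mul_right_cancel₀ (sub_ne_zero.2 hab.ne') ?_
    linarith
  have hslope := h a (left_mem_Icc.2 hab.le) x (Ioo_subset_Icc_self hx)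
  rw [hc] at hslope
  linarith

end HasSlopeOn

end Slope

section PeriodicBreakPoints

theorem exists_hasSlopeOn_iterate {f : ℝ → ℝ} {B : Set ℝ} (hmono : Monotone f)
    (haff : ∀ a b, Disjoint (Ioo a b) B → ∃ c, HasSlopeOn f c (Icc a b)) {a b : ℝ}
    (hB : ∀ j, Disjoint (Ioo (f^[j] a) (f^[j] b)) B) (n : ℕ) :
    ∃ c, HasSlopeOn f^[n] c (Icc a b) := by
  induction n with
  | zero => exact ⟨1, fun x _ y _ => by simp⟩
  | succ n ih =>
    obtain ⟨c, hc⟩ := ih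
    obtain ⟨d, hd⟩ := haff _ _ (hB n)
    rw [iterate_succ']
    exact ⟨d * c, hd.comp hc fun y hy => ⟨hmono.iterate n hy.1, hmono.iterate n hy.2⟩⟩

theorem iterate_add_int (f : CircleDeg1Lift) (n : ℕ) (x : ℝ) (m : ℤ) :
    f^[n] (x + m) = f^[n] x + m :=
  ((f.commute_add_int m).iterate_left n).eq x

variable {f : CircleDeg1Lift} {p : ℤ} {q : ℕ}

theorem iterate_eq_add_of_iterate_iterate_eq_add (hinj : Injective f) {j : ℕ} {x : ℝ}
    (h : f^[q] (f^[j] x) = f^[j] x + p) : f^[q] x = x + p := by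
  apply hinj.iterate j
  rw [iterate_add_int, ← h, (Commute.iterate_iterate_self f j q).eq x]

theorem iterate_eq_add_of_forall_mem {B : Set ℝ} (hcont : Continuous f) (hinj : Injective f)
    (hne : B.Nonempty) (haff : ∀ a b, Disjoint (Ioo a b) B → ∃ c, HasSlopeOn f c (Icc a b))
    (hB : ∀ x ∈ B, f^[q] x = x + p) (x : ℝ) : f^[q] x = x + p := by
  obtain ⟨x₀, hx₀⟩ := hne
  let E : Set ℝ := {y | f^[q] y = y + p}
  have hE : IsClosed E := isClosed_eq (hcont.iterate q) (by fun_prop)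
  have hE_int : ∀ n : ℤ, x₀ + n ∈ E := fun n => by
    simp only [E, mem_ofPred_eq, iterate_add_int, hB x₀ hx₀, add_right_comm]
  by_contra hx
  obtain ⟨a, ha, b, hb, hxab, hdisj⟩ := exists_mem_Ioo_disjoint_of_notMem hE hx
    ⟨x₀ + ⌊x - x₀⌋, hE_int _, mem_Iic.2 (le_sub_iff_add_le'.1 (Int.floor_le _))⟩
    ⟨x₀ + ⌈x - x₀⌉, hE_int _, mem_Ici.2 (sub_le_iff_le_add'.1 (Int.le_ceil _))⟩
  have hdisj_iterate : ∀ j, Disjoint (Ioo (f^[j] a) (f^[j] b)) B := fun j =>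
    disjoint_left.2 fun z hz hzB => by
      obtain ⟨y, hy, rfl⟩ := intermediate_value_Ioo (hxab.1.trans hxab.2).le
        (hcont.iterate j).continuousOn hz
      exact disjoint_left.1 hdisj hy
        (iterate_eq_add_of_iterate_iterate_eq_add hinj (hB _ hzB))
  obtain ⟨c, hc⟩ := exists_hasSlopeOn_iterate f.monotone haff hdisj_iterate q
  exact hx (hc.eq_add_of_eq_add ha hb hxab)

end PeriodicBreakPoints

section CyclicOrder

variable {k : ℕ}

/-- The index following `i` mod `k`, the inverse of `prevIdx`. -/
def nextIdx (i : Fin k) : Fin k :=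
  ⟨((i : ℕ) + 1) % k, Nat.mod_lt _ i.pos⟩

theorem nextIdx_prevIdx (i : Fin k) : nextIdx (prevIdx i) = i := by
  have hi := i.isLt
  ext
  simp only [nextIdx, prevIdx, Nat.mod_add_mod]
  rw [show (i : ℕ) + k - 1 + 1 = i + k by omega, Nat.add_mod_right, Nat.mod_eq_of_lt hi]

theorem exists_nextPt_eq_add_int (t : Fin k → ℝ) (i : Fin k) :
    ∃ m : ℤ, nextPt t i = t (nextIdx i) + m := by
  unfold nextPt nextIdx
  split_ifs with h
  · exact ⟨0, by simp only [Nat.mod_eq_of_lt h, Int.cast_zero, add_zero]⟩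
  · have hk : (i : ℕ) + 1 = k := by omega
    exact ⟨1, by simp only [hk, Nat.mod_self, Int.cast_one]⟩

/-- The lifts to `ℝ` of the points of the circle represented by the `t i`: if the `t i` are
the break points of a circle map, these are all the break points of its lift. -/
def liftedPts (t : Fin k → ℝ) : Set ℝ :=
  {x | ∃ (i : Fin k) (m : ℤ), x = t i + m}

theorem nextPt_add_int_mem_liftedPts (t : Fin k → ℝ) (i : Fin k) (n : ℤ) :
    nextPt t i + n ∈ liftedPts t := by
  obtain ⟨m, hm⟩ := exists_nextPt_eq_add_int t i
  exact ⟨nextIdx i, m + n, by rw [hm, Int.cast_add, add_assoc]⟩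

theorem exists_mem_Ico_nextPt (hk : 0 < k) (t : Fin k → ℝ) (y : ℝ) :
    ∃ (i : Fin k) (n : ℤ), y ∈ Ico (t i + n) (nextPt t i + n) := by
  let n : ℤ := ⌊y - t ⟨0, hk⟩⌋
  have hn : t ⟨0, hk⟩ ≤ y - n := by linarith [Int.floor_le (y - t ⟨0, hk⟩)]
  have hn' : y - n < t ⟨0, hk⟩ + 1 := by linarith [Int.lt_floor_add_one (y - t ⟨0, hk⟩)]
  obtain ⟨i, hi, hmax⟩ := (Set.toFinite {i | t i ≤ y - n}).exists_maximal ⟨⟨0, hk⟩, hn⟩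
  refine ⟨i, n, le_sub_iff_add_le.1 hi, sub_lt_iff_lt_add.1 ?_⟩
  unfold nextPt
  split_ifs with h
  · exact lt_of_not_ge fun hle => absurd (hmax hle (Nat.le_succ i)) (Nat.not_succ_le_self i)
  · exact hn'

end CyclicOrder

/-- `f` is the lift of a piecewise linear circle homeomorphism with break points `t i` and slopes
`s i`. The break points need not start at `0`: any fundamental domain `[t₀, t₀ + 1)` may be used. -/
structure IsPiecewiseLinear (f : CircleDeg1Lift) {k : ℕ} (t s : Fin k → ℝ) : Prop where
  strictMono : StrictMono f
  strictMono_break : StrictMono t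
  break_lt_add_one : ∀ i : Fin k, t i < t ⟨0, i.pos⟩ + 1
  slope_ne : ∀ i, s i ≠ s (nextIdx i)
  map_eq : ∀ i, ∀ x ∈ Icc (t i) (nextPt t i), f x = f (t i) + s i * (x - t i)

namespace IsPiecewiseLinear

variable {f : CircleDeg1Lift} {k : ℕ} {t s : Fin k → ℝ}

theorem lt_nextPt (hf : IsPiecewiseLinear f t s) (i : Fin k) : t i < nextPt t i := by
  unfold nextPt
  split_ifs with h
  · exact hf.strictMono_break (Nat.lt_succ_self i)
  · exact hf.break_lt_add_one i

theorem hasSlopeOn (hf : IsPiecewiseLinear f t s) (i : Fin k) (n : ℤ) :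
    HasSlopeOn f (s i) (Icc (t i + n) (nextPt t i + n)) := by
  have hmap : ∀ x ∈ Icc (t i + n) (nextPt t i + n), f x = f (t i) + s i * (x - n - t i) + n :=
    fun x hx => by
      rw [← hf.map_eq i (x - n) ⟨le_sub_iff_add_le.2 hx.1, sub_le_iff_le_add.2 hx.2⟩,
        ← f.map_add_int, sub_add_cancel]
  intro x hx y hy
  rw [hmap x hx, hmap y hy]
  ring

theorem slope_pos (hf : IsPiecewiseLinear f t s) (i : Fin k) : 0 < s i := by
  have hlt := hf.lt_nextPt i
  have hmap := hf.map_eq i _ (right_mem_Icc.2 hlt.le)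
  have hprod : 0 < s i * (nextPt t i - t i) := by linarith [hf.strictMono hlt]
  exact pos_of_mul_pos_left hprod (sub_pos.2 hlt).le

theorem hasDerivWithinAt_Ici_break (hf : IsPiecewiseLinear f t s) (i : Fin k) (n : ℤ) :
    HasDerivWithinAt f (s i) (Ici (t i + n)) (t i + n) :=
  (hf.hasSlopeOn i n).hasDerivWithinAt_Ici (left_mem_Ico.2 (by linarith [hf.lt_nextPt i]))

theorem hasDerivWithinAt_Iic_break (hf : IsPiecewiseLinear f t s) (i : Fin k) (n : ℤ) :
    HasDerivWithinAt f (s (prevIdx i)) (Iic (t i + n)) (t i + n) := by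
  obtain ⟨m, hm⟩ := exists_nextPt_eq_add_int t (prevIdx i)
  rw [nextIdx_prevIdx] at hm
  have hend : t i + n = nextPt t (prevIdx i) + (n - m : ℤ) := by rw [hm]; push_cast; ring
  rw [hend]
  exact (hf.hasSlopeOn _ _).hasDerivWithinAt_Iic
    (right_mem_Ioc.2 (by linarith [hf.lt_nextPt (prevIdx i)]))

theorem leftDeriv_ne_rightDeriv_break (hf : IsPiecewiseLinear f t s) (i : Fin k) :
    leftDeriv f (t i) ≠ rightDeriv f (t i) := by
  have hl := hf.hasDerivWithinAt_Iic_break i 0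
  have hr := hf.hasDerivWithinAt_Ici_break i 0
  rw [Int.cast_zero, add_zero] at hl hr
  rw [leftDeriv_eq hl, rightDeriv_eq hr]
  simpa only [nextIdx_prevIdx] using hf.slope_ne (prevIdx i)

theorem exists_hasDerivWithinAt (hf : IsPiecewiseLinear f t s) (hk : 0 < k) (y : ℝ) :
    ∃ l r : Fin k, HasDerivWithinAt f (s l) (Iic y) y ∧ HasDerivWithinAt f (s r) (Ici y) y ∧
      (l = r ∨ l = prevIdx r ∧ ∃ m : ℤ, y - t r = m) := by
  obtain ⟨i, n, hy⟩ := exists_mem_Ico_nextPt hk t y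
  rcases hy.1.eq_or_lt with rfl | hlt
  · exact ⟨prevIdx i, i, hf.hasDerivWithinAt_Iic_break i n, hf.hasDerivWithinAt_Ici_break i n,
      .inr ⟨rfl, n, add_sub_cancel_left _ _⟩⟩
  · exact ⟨i, i, (hf.hasSlopeOn i n).hasDerivWithinAt_Iic ⟨hlt, hy.2.le⟩,
      (hf.hasSlopeOn i n).hasDerivWithinAt_Ici hy, .inl rfl⟩

theorem exists_break_of_leftDeriv_ne_rightDeriv (hf : IsPiecewiseLinear f t s) (hk : 0 < k)
    {y : ℝ} (hy : leftDeriv f y ≠ rightDeriv f y) :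
    ∃ i, leftDeriv f y = s (prevIdx i) ∧ rightDeriv f y = s i ∧ ∃ m : ℤ, y - t i = m := by
  obtain ⟨l, r, hl, hr, rfl | ⟨rfl, hm⟩⟩ := hf.exists_hasDerivWithinAt hk y
  · exact absurd ((leftDeriv_eq hl).trans (rightDeriv_eq hr).symm) hy
  · exact ⟨r, leftDeriv_eq hl, rightDeriv_eq hr, hm⟩

theorem continuous (hf : IsPiecewiseLinear f t s) (hk : 0 < k) : Continuous f :=
  continuous_iff_continuousAt.2 fun y => by
    obtain ⟨_, _, hl, hr, _⟩ := hf.exists_hasDerivWithinAt hk y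
    exact continuousAt_iff_continuous_left_right.2 ⟨hl.continuousWithinAt, hr.continuousWithinAt⟩

theorem exists_hasSlopeOn_of_disjoint (hf : IsPiecewiseLinear f t s) (hk : 0 < k) (a b : ℝ)
    (hab : Disjoint (Ioo a b) (liftedPts t)) : ∃ c, HasSlopeOn f c (Icc a b) := by
  obtain ⟨i, n, ha⟩ := exists_mem_Ico_nextPt hk t a
  have hb : b ≤ nextPt t i + n := le_of_not_gt fun hlt =>
    disjoint_left.1 hab ⟨ha.2, hlt⟩ (nextPt_add_int_mem_liftedPts t i n)
  exact ⟨s i, (hf.hasSlopeOn i n).mono (Icc_subset_Icc ha.1 hb)⟩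

theorem iterate_eq_add_iff_forall_break (hf : IsPiecewiseLinear f t s) (hk : 0 < k) {p : ℤ}
    {q : ℕ} : (f^[q] = fun x => x + (p : ℝ)) ↔ ∀ i, f^[q] (t i) = t i + p := by
  refine ⟨fun h i => congrFun h (t i), fun h => funext ?_⟩
  refine iterate_eq_add_of_forall_mem (B := liftedPts t) (hf.continuous hk) hf.strictMono.injective
    ⟨t ⟨0, hk⟩, ⟨0, hk⟩, 0, by simp⟩ (hf.exists_hasSlopeOn_of_disjoint hk) ?_
  rintro _ ⟨i, m, rfl⟩
  rw [iterate_add_int, h i, add_right_comm]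

theorem exists_up_and_down_break_of_differentiableAt_iterate (hf : IsPiecewiseLinear f t s) {q : ℕ}
    (hq : 1 ≤ q) (i : Fin k) (hd : DifferentiableAt ℝ f^[q] (t i)) :
    (∃ (ju : ℕ) (u : Fin k), ju < q ∧ s (prevIdx u) < s u ∧
      ∃ mu : ℤ, f^[ju] (t i) - t u = (mu : ℝ)) ∧
    (∃ (jd : ℕ) (d : Fin k), jd < q ∧ s d < s (prevIdx d) ∧
      ∃ md : ℤ, f^[jd] (t i) - t d = (md : ℝ)) := by
  choose l r hl hr _ using hf.exists_hasDerivWithinAt i.pos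
  have hprod := prod_leftDeriv_eq_prod_rightDeriv f.monotone
    (fun y => (hl y).differentiableWithinAt) (fun y => (hr y).differentiableWithinAt) hd
  have hne := hf.leftDeriv_ne_rightDeriv_break i
  have hq₀ : 0 ∈ Finset.range q := Finset.mem_range.2 hq
  constructor
  · obtain ⟨j, hj, hlt⟩ := exists_lt_of_prod_eq_prod
      (fun j _ => by rw [rightDeriv_eq (hr _)]; exact hf.slope_pos _) hprod hq₀ hne
    obtain ⟨u, hul, hur, hm⟩ := hf.exists_break_of_leftDeriv_ne_rightDeriv i.pos hlt.ne
    exact ⟨j, u, Finset.mem_range.1 hj, hul ▸ hur ▸ hlt, hm⟩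
  · obtain ⟨j, hj, hlt⟩ := exists_lt_of_prod_eq_prod
      (fun j _ => by rw [leftDeriv_eq (hl _)]; exact hf.slope_pos _) hprod.symm hq₀ hne.symm
    obtain ⟨d, hdl, hdr, hm⟩ := hf.exists_break_of_leftDeriv_ne_rightDeriv i.pos hlt.ne'
    exact ⟨j, d, Finset.mem_range.1 hj, hdl ▸ hdr ▸ hlt, hm⟩

end IsPiecewiseLinear

theorem stmt15_general {k : ℕ} (hk : 0 < k) {f : CircleDeg1Lift} {t s : Fin k → ℝ}
    (hf : IsPiecewiseLinear f t s) {p : ℤ} {q : ℕ} (hq : 1 ≤ q) :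
    (f^[q] = fun x => x + (p : ℝ)) ↔
    ∀ i : Fin k,
      f^[q] (t i) = t i + (p : ℝ) ∧
      (∃ (ju : ℕ) (u : Fin k), ju < q ∧ s (prevIdx u) < s u ∧
        ∃ mu : ℤ, f^[ju] (t i) - t u = (mu : ℝ)) ∧
      (∃ (jd : ℕ) (d : Fin k), jd < q ∧ s d < s (prevIdx d) ∧
        ∃ md : ℤ, f^[jd] (t i) - t d = (md : ℝ)) := by
  refine ⟨fun h i => ⟨congrFun h (t i), ?_⟩,
    fun h => (hf.iterate_eq_add_iff_forall_break hk).2 fun i => (h i).1⟩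
  exact hf.exists_up_and_down_break_of_differentiableAt_iterate hq i (h ▸ by fun_prop)

/-- Characterization of pinch points for PL circle homeomorphisms: if `g` is a
lift of a PL degree-one circle homeomorphism with `k ≥ 2` break points
`0 = t_1 < ⋯ < t_k < 1`, slopes `s_i`, and translation number `p/q` (`p, q`
coprime, `q ≥ 1`), then `g^[q]` is the translation by `p` iff every break point
lies on a `p/q`-periodic orbit that contains a break point of type up and a
break point of type down. -/
theorem stmt15 (k : ℕ) (hk : 2 ≤ k) (g : ℝ → ℝ) (hcont : Continuous g)
    (hmono : StrictMono g) (hdeg : ∀ x, g (x + 1) = g x + 1)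
    (t s : Fin k → ℝ)
    (ht0 : t ⟨0, by omega⟩ = 0) (htmono : StrictMono t) (ht1 : ∀ i, t i < 1)
    (hs : ∀ i, 0 < s i)
    (hsne : ∀ i : Fin k, s i ≠ s ⟨((i : ℕ) + 1) % k, Nat.mod_lt _ i.pos⟩)
    (haff : ∀ i : Fin k, ∀ x ∈ Set.Icc (t i) (nextPt t i),
      g x = g (t i) + s i * (x - t i))
    (p : ℤ) (q : ℕ) (hq : 1 ≤ q) (hpq : Int.gcd p q = 1)
    (hrot : Filter.Tendsto (fun m : ℕ => g^[m] 0 / m) Filter.atTop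
      (nhds ((p : ℝ) / q))) :
    (g^[q] = fun x => x + (p : ℝ)) ↔
    ∀ i : Fin k,
      g^[q] (t i) = t i + (p : ℝ) ∧
      (∃ (ju : ℕ) (u : Fin k), ju < q ∧ s (prevIdx u) < s u ∧
        ∃ mu : ℤ, g^[ju] (t i) - t u = (mu : ℝ)) ∧
      (∃ (jd : ℕ) (d : Fin k), jd < q ∧ s d < s (prevIdx d) ∧
        ∃ md : ℤ, g^[jd] (t i) - t d = (md : ℝ)) :=
    stmt15_general (f := ⟨⟨g, hmono.monotone⟩, hdeg⟩) (by omega)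
      ⟨hmono, htmono, fun i => by simpa only [ht0, zero_add] using ht1 i, hsne, haff⟩ hq
end

section
/- Let f : ℝ → ℝ be Lipschitz and suppose the set {x ∈ ℝ : f is differentiable at x and deriv f x = 0} has positive Lebesgue measure. Then for every integer p and every integer q ≥ 1, the q-th iterate of f is not equal to the translation x ↦ x + p. -/
open MeasureTheory

/-!
The chain rule `(g ∘ f)'(x) = g'(f x) ∘ f'(x)` survives without differentiability of `g` when
`f'(x) = 0`: it is enough that `g` is Lipschitz near `f x`, and then `(g ∘ f)'(x) = 0`. With
`g = f^[q - 1]`, the iterate `f^[q]` has derivative zero wherever `f` does, whereas a translation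
has the identity as derivative everywhere.
-/

open Asymptotics
open scoped Topology NNReal

theorem isBigO_sub_of_lipschitzOnWith {E F : Type*} [SeminormedAddCommGroup E]
    [SeminormedAddCommGroup F] {g : E → F} {K : ℝ≥0} {s : Set E} {a : E}
    (hg : LipschitzOnWith K g s) (hs : s ∈ 𝓝 a) :
    (fun y => g y - g a) =O[𝓝 a] fun y => y - a := by
  refine .of_bound K ?_
  filter_upwards [hs] with y hy
  exact hg.norm_sub_le hy (mem_of_mem_nhds hs)

section Seminormed

variable {𝕜 E F G : Type*} [NontriviallyNormedField 𝕜]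
  [SeminormedAddCommGroup E] [NormedSpace 𝕜 E]
  [SeminormedAddCommGroup F] [NormedSpace 𝕜 F]
  [SeminormedAddCommGroup G] [NormedSpace 𝕜 G]

theorem hasFDerivAt_zero_comp_of_isBigO {f : E → F} {g : F → G} {x : E}
    (hg : (fun y => g y - g (f x)) =O[𝓝 (f x)] fun y => y - f x)
    (hf : HasFDerivAt f (0 : E →L[𝕜] F) x) :
    HasFDerivAt (g ∘ f) (0 : E →L[𝕜] G) x := by
  have hf_littleO : (fun y => f y - f x) =o[𝓝 x] fun y => y - x := by
    simpa only [zero_apply, sub_zero] using hf.isLittleO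
  have hgf_bigO : (fun y => g (f y) - g (f x)) =O[𝓝 x] fun y => f y - f x :=
    hg.comp_tendsto hf.continuousAt
  refine .of_isLittleO ?_
  simpa only [Function.comp_apply, zero_apply, sub_zero]
    using hgf_bigO.trans_isLittleO hf_littleO

theorem hasFDerivAt_iterate_zero {f : E → E} {x : E} (hL : LocallyLipschitz f)
    (hf : HasFDerivAt f (0 : E →L[𝕜] E) x) {q : ℕ} (hq : q ≠ 0) :
    HasFDerivAt f^[q] (0 : E →L[𝕜] E) x := by
  obtain ⟨n, rfl⟩ := Nat.exists_eq_succ_of_ne_zero hq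
  obtain ⟨K, s, hs, hLs⟩ := hL.iterate n (f x)
  exact hasFDerivAt_zero_comp_of_isBigO (isBigO_sub_of_lipschitzOnWith hLs hs) hf

end Seminormed

theorem stmt19_general {𝕜 E : Type*} [NontriviallyNormedField 𝕜] [NormedAddCommGroup E]
    [NormedSpace 𝕜 E] [Nontrivial E] {f : E → E} {x : E} (hL : LocallyLipschitz f)
    (hf : HasFDerivAt f (0 : E →L[𝕜] E) x) {q : ℕ} (hq : q ≠ 0) (v : E) :
    f^[q] ≠ fun y => y + v := by
  intro h_eq
  have h_zero : HasFDerivAt (fun y => y + v) (0 : E →L[𝕜] E) x :=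
    h_eq ▸ hasFDerivAt_iterate_zero hL hf hq
  have h_id : HasFDerivAt (fun y => y + v) (ContinuousLinearMap.id 𝕜 E) x :=
    (hasFDerivAt_id x).add_const v
  exact zero_ne_one (h_zero.unique h_id)

/-- If a Lipschitz map `f : ℝ → ℝ` has derivative zero on a set of positive
Lebesgue measure, then no iterate of `f` is an integer translation. -/
theorem stmt19 (f : ℝ → ℝ) (hL : ∃ K, LipschitzWith K f)
    (hpos : 0 < volume {x : ℝ | DifferentiableAt ℝ f x ∧ deriv f x = 0}) :
    ∀ (p : ℤ) (q : ℕ), 1 ≤ q → f^[q] ≠ fun x => x + (p : ℝ) := by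
  obtain ⟨x, hfx, h_deriv⟩ := nonempty_of_measure_ne_zero hpos.ne'
  exact fun p q hq => stmt19_general hL.choose_spec.locallyLipschitz
    (by simpa [h_deriv] using hfx.hasDerivAt.hasFDerivAt) (Nat.one_le_iff_ne_zero.1 hq) (p : ℝ)
end
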